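/- arXiv:quant-ph/0308088 — 3 statements merged into one kernel-verified Lean document; each statement's English description precedes it below -/
import Mathlib

section
/- For every state ρ^{AB} on H_A ⊗ H_B, squashed entanglement is lower bounded as (1/2)(I(A;B) - S(AB)) ≤ E_sq(ρ^{AB}), where I(A;B) = S(A) + S(B) - S(AB) is the quantum mutual information of ρ^{AB}. -/
open Matrix BigOperators Kronecker
open scoped Classical ComplexOrder

noncomputable section

/-- A (quantum) state: positive semidefinite matrix of trace 1. -/
def IsState {n : Type*} [Fintype n] (ρ : Matrix n n ℂ) : Prop :=
  ρ.PosSemidef ∧ ρ.trace = 1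

/-- Von Neumann entropy (base 2), via the eigenvalues of a Hermitian matrix. -/
def vonNeumannEntropy {n : Type*} [Fintype n] (ρ : Matrix n n ℂ) : ℝ :=
  if h : ρ.IsHermitian then ∑ i, -(h.eigenvalues i * Real.logb 2 (h.eigenvalues i)) else 0

/-- Partial trace over the second (right) factor. -/
def ptraceR {A B : Type*} [Fintype A] [Fintype B]
    (ρ : Matrix (A × B) (A × B) ℂ) : Matrix A A ℂ :=
  fun i j => ∑ b, ρ (i, b) (j, b)

/-- Partial trace over the first (left) factor. -/
def ptraceL {A B : Type*} [Fintype A] [Fintype B]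
    (ρ : Matrix (A × B) (A × B) ℂ) : Matrix B B ℂ :=
  fun i j => ∑ a, ρ (a, i) (a, j)

variable {A B E : Type*} [Fintype A] [Fintype B] [Fintype E]

/-- Marginal of a tripartite state on `A × E` (trace out `B`). -/
def margAE (ρ : Matrix (A × B × E) (A × B × E) ℂ) : Matrix (A × E) (A × E) ℂ :=
  fun x y => ∑ b, ρ (x.1, b, x.2) (y.1, b, y.2)

/-- Marginal of a tripartite state on `B × E` (trace out `A`). -/
def margBE (ρ : Matrix (A × B × E) (A × B × E) ℂ) : Matrix (B × E) (B × E) ℂ :=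
  fun x y => ∑ a, ρ (a, x.1, x.2) (a, y.1, y.2)

/-- Marginal of a tripartite state on `E` (trace out `A` and `B`). -/
def margE (ρ : Matrix (A × B × E) (A × B × E) ℂ) : Matrix E E ℂ :=
  fun x y => ∑ a, ∑ b, ρ (a, b, x) (a, b, y)

/-- Marginal of a tripartite state on `A × B` (trace out `E`). -/
def margAB (ρ : Matrix (A × B × E) (A × B × E) ℂ) : Matrix (A × B) (A × B) ℂ :=
  fun x y => ∑ e, ρ (x.1, x.2, e) (y.1, y.2, e)

/-- Quantum conditional mutual information `I(A;B|E) = S(AE)+S(BE)-S(ABE)-S(E)`. -/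
def condMutualInfo (ρ : Matrix (A × B × E) (A × B × E) ℂ) : ℝ :=
  vonNeumannEntropy (margAE ρ) + vonNeumannEntropy (margBE ρ)
    - vonNeumannEntropy ρ - vonNeumannEntropy (margE ρ)

/-- Squashed entanglement: infimum of `(1/2) I(A;B|E)` over all finite-dimensional
extensions of `ρ`. -/
def Esq {A B : Type*} [Fintype A] [Fintype B] (ρ : Matrix (A × B) (A × B) ℂ) : ℝ :=
  sInf { x : ℝ | ∃ (d : ℕ) (ρE : Matrix (A × B × Fin d) (A × B × Fin d) ℂ),
    IsState ρE ∧ margAB ρE = ρ ∧ x = (1 / 2) * condMutualInfo ρE }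

/-- Outer product `|ψ⟩⟨ψ|`. -/
def outer {n : Type*} (ψ : n → ℂ) : Matrix n n ℂ :=
  Matrix.vecMulVec ψ (star ψ)

/-- Trace norm of a Hermitian matrix: sum of the absolute values of its eigenvalues. -/
def traceNorm {n : Type*} [Fintype n] (X : Matrix n n ℂ) : ℝ :=
  if h : X.IsHermitian then ∑ i, |h.eigenvalues i| else 0

/-- Entanglement of formation: infimum of average entanglement entropy over all
finite pure-state ensembles for `ρ`. -/
def EoF {A B : Type*} [Fintype A] [Fintype B] (ρ : Matrix (A × B) (A × B) ℂ) : ℝ :=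
  sInf { x : ℝ | ∃ (n : ℕ) (p : Fin n → ℝ) (ψ : Fin n → A × B → ℂ),
    (∀ k, 0 ≤ p k) ∧ (∑ k, p k) = 1 ∧ (∀ k, ∑ i, ‖ψ k i‖ ^ 2 = 1) ∧
    (∑ k, (p k : ℂ) • outer (ψ k)) = ρ ∧
    x = ∑ k, p k * vonNeumannEntropy (ptraceR (outer (ψ k))) }

/-- The function `η` : `η(x) = -x log₂ x` for `x ≤ 1/4`, `1/2` otherwise. -/
def eta (x : ℝ) : ℝ := if x ≤ 1 / 4 then -(x * Real.logb 2 x) else 1 / 2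

/-! Let `r / (s + t r)`, averaged over the eigenvalues `r` of `ρ` and `s` of `σ` with the
Nussbaum–Szkoła weights, be the quasi-entropy `Q_t(ρ, σ)`. It is the maximum over `K` of
`2 Re Tr(ρ K†) - Tr(σ K† K) - t Tr(ρ K K†)`. Restricting `ρ` and `σ` to a subalgebra only shrinks
the set of admissible `K`, so `Q_t` decreases. Since `Q_t` is the `t`-derivative of the average of
`log (s + t r)`, which equals `Tr ρ log σ` at `t = 0` and `Tr ρ log ρ + Tr ρ log t + o(1)` as
`t → ∞`, integrating over `t` shows that relative entropy decreases as well.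

Applied to `ρ^{ABE}` and `1 ⊗ ρ^{BE}` under restriction to `AB`, this is strong subadditivity;
purification turns it into weak monotonicity. Their sum is `I(A;B|E) ≥ 2 (S(B) - S(AB))` for every
extension, and averaging with the same bound for `A` gives the theorem.
-/

section Entropy

theorem vonNeumannEntropy_eq_sum_roots_charpoly {n : Type*} [Fintype n] [DecidableEq n]
    {ρ : Matrix n n ℂ} (hρ : ρ.IsHermitian) :
    vonNeumannEntropy ρ
      = (ρ.charpoly.roots.map fun z : ℂ => -(z.re * Real.logb 2 z.re)).sum := by
  obtain rfl : ‹DecidableEq n› = fun a b => Classical.propDecidable (a = b) :=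
    Subsingleton.elim _ _
  rw [vonNeumannEntropy, dif_pos hρ, hρ.roots_charpoly_eq_eigenvalues, Multiset.map_map]
  rfl

variable {m n : Type*} [Fintype m] [Fintype n]

theorem vonNeumannEntropy_submatrix_equiv (e : m ≃ n) {ρ : Matrix n n ℂ} (hρ : ρ.IsHermitian) :
    vonNeumannEntropy (ρ.submatrix e e) = vonNeumannEntropy ρ := by
  rw [vonNeumannEntropy_eq_sum_roots_charpoly hρ,
    vonNeumannEntropy_eq_sum_roots_charpoly (hρ.submatrix e), ← charpoly_reindex e.symm ρ,
    reindex_apply, Equiv.symm_symm]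

theorem vonNeumannEntropy_transpose {ρ : Matrix n n ℂ} (hρ : ρ.IsHermitian) :
    vonNeumannEntropy ρᵀ = vonNeumannEntropy ρ := by
  rw [vonNeumannEntropy_eq_sum_roots_charpoly hρ,
    vonNeumannEntropy_eq_sum_roots_charpoly hρ.transpose, charpoly_transpose]

theorem vonNeumannEntropy_mul_conjTranspose_comm (K : Matrix m n ℂ) :
    vonNeumannEntropy (K * Kᴴ) = vonNeumannEntropy (Kᴴ * K) := by
  have hX (k : ℕ) (M : Polynomial ℂ) (hM : M.Monic) :
      ((Polynomial.X ^ k * M).roots.map fun z : ℂ => -(z.re * Real.logb 2 z.re)).sum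
        = (M.roots.map fun z : ℂ => -(z.re * Real.logb 2 z.re)).sum := by
    rw [Polynomial.roots_mul (mul_ne_zero (pow_ne_zero _ Polynomial.X_ne_zero) hM.ne_zero)]
    simp [Multiset.map_nsmul, Multiset.sum_nsmul]
  rw [vonNeumannEntropy_eq_sum_roots_charpoly (isHermitian_mul_conjTranspose_self K),
    vonNeumannEntropy_eq_sum_roots_charpoly (isHermitian_conjTranspose_mul_self K),
    ← hX _ _ (charpoly_monic (K * Kᴴ)), charpoly_mul_comm', hX _ _ (charpoly_monic _)]

-- `K` is read as a bipartite vector, whose two marginals are `K * Kᴴ` and `(Kᴴ * K)ᵀ`.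
theorem vonNeumannEntropy_transpose_conjTranspose_mul (K : Matrix m n ℂ) :
    vonNeumannEntropy (Kᴴ * K)ᵀ = vonNeumannEntropy (K * Kᴴ) := by
  rw [vonNeumannEntropy_transpose (isHermitian_conjTranspose_mul_self K),
    vonNeumannEntropy_mul_conjTranspose_comm]

end Entropy

section FunctionalCalculus

variable {n : Type*} [Fintype n] [DecidableEq n] {ρ σ : Matrix n n ℂ}

theorem continuousOn_spectrum_real (f : ℝ → ℝ) (ρ : Matrix n n ℂ) :
    ContinuousOn f (spectrum ℝ ρ) :=
  ρ.finite_real_spectrum.continuousOn f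

theorem mul_cfc_self (hρ : ρ.IsHermitian) (f : ℝ → ℝ) :
    ρ * cfc f ρ = cfc (fun x => x * f x) ρ := by
  rw [cfc_mul (fun x => x) f ρ continuousOn_id (continuousOn_spectrum_real f ρ),
    cfc_id' ℝ ρ hρ.isSelfAdjoint]

theorem starAlgHom_map_cfc {m : Type*} [Fintype m] [DecidableEq m]
    (ι : Matrix n n ℂ →⋆ₐ[ℂ] Matrix m m ℂ) (hρ : ρ.IsHermitian) (f : ℝ → ℝ) :
    ι (cfc f ρ) = cfc f (ι ρ) :=
  StarAlgHomClass.map_cfc ι f ρ (continuousOn_spectrum_real f ρ)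
    (LinearMap.continuous_of_finiteDimensional ι.toLinearMap) hρ.isSelfAdjoint
    (hρ.isSelfAdjoint.map ι)

/-- The coefficients `⟨uᵢ, X vⱼ⟩` of `X` in the eigenbases `u` of `ρ` and `v` of `σ`. -/
def eigenCoeff (hρ : ρ.IsHermitian) (hσ : σ.IsHermitian) (X : Matrix n n ℂ) : Matrix n n ℂ :=
  (hρ.eigenvectorUnitary : Matrix n n ℂ)ᴴ * X * hσ.eigenvectorUnitary

theorem eigenCoeff_surjective (hρ : ρ.IsHermitian) (hσ : σ.IsHermitian) :
    Function.Surjective (eigenCoeff hρ hσ) := by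
  intro Z
  refine ⟨hρ.eigenvectorUnitary * Z * (hσ.eigenvectorUnitary : Matrix n n ℂ)ᴴ, ?_⟩
  simp only [eigenCoeff, ← star_eq_conjTranspose, Matrix.mul_assoc, Unitary.coe_star_mul_self,
    Matrix.mul_one]
  rw [← Matrix.mul_assoc, Unitary.coe_star_mul_self, Matrix.one_mul]

theorem trace_diagonal_mul_mul_diagonal_mul_conjTranspose (a b : n → ℂ) (X Y : Matrix n n ℂ) :
    (diagonal a * X * diagonal b * Yᴴ).trace = ∑ i, ∑ j, a i * b j * (X i j * star (Y i j)) := by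
  simp only [trace, diag_apply, Matrix.mul_apply (N := Yᴴ), mul_diagonal, diagonal_mul,
    conjTranspose_apply]
  exact Finset.sum_congr rfl fun i _ => Finset.sum_congr rfl fun j _ => by ring

theorem trace_cfc_mul_mul_cfc_mul_conjTranspose (hρ : ρ.IsHermitian) (hσ : σ.IsHermitian)
    (f g : ℝ → ℝ) (X Y : Matrix n n ℂ) :
    (cfc f ρ * X * cfc g σ * Yᴴ).trace
      = ∑ i, ∑ j, (f (hρ.eigenvalues i) : ℂ) * g (hσ.eigenvalues j)
          * (eigenCoeff hρ hσ X i j * star (eigenCoeff hρ hσ Y i j)) := by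
  rw [← trace_diagonal_mul_mul_diagonal_mul_conjTranspose, hρ.cfc_eq, hσ.cfc_eq]
  simp only [IsHermitian.cfc, Unitary.conjStarAlgAut_apply, eigenCoeff, conjTranspose_mul,
    conjTranspose_conjTranspose, star_eq_conjTranspose]
  simp only [Matrix.mul_assoc]
  rw [trace_mul_comm]
  simp only [Matrix.mul_assoc]
  rfl

theorem log_two_mul_vonNeumannEntropy (hρ : ρ.IsHermitian) :
    Real.log 2 * vonNeumannEntropy ρ = -(ρ * cfc Real.log ρ).trace.re := by
  have htrace : (ρ * cfc Real.log ρ).trace.re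
      = ∑ i, hρ.eigenvalues i * Real.log (hρ.eigenvalues i) := by
    rw [mul_cfc_self hρ, hρ.cfc_eq, IsHermitian.cfc, Unitary.conjStarAlgAut_apply,
      trace_mul_comm, ← Matrix.mul_assoc, Unitary.coe_star_mul_self, Matrix.one_mul,
      trace_diagonal, Complex.re_sum]
    rfl
  have hlog : Real.log 2 ≠ 0 := (Real.log_pos one_lt_two).ne'
  rw [htrace, vonNeumannEntropy_eq_sum_roots_charpoly hρ, hρ.roots_charpoly_eq_eigenvalues,
    Multiset.map_map, ← Finset.sum_eq_multiset_sum, Finset.mul_sum, ← Finset.sum_neg_distrib]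
  refine Finset.sum_congr rfl fun i _ => ?_
  rw [Function.comp_apply, Real.logb, mul_neg, mul_div_assoc', mul_div_cancel₀ _ hlog]
  rfl

end FunctionalCalculus

section PositiveSemidefinite

variable {n : Type*} [Fintype n] {ρ σ : Matrix n n ℂ}

theorem exists_eq_mul_conjTranspose (hρ : ρ.PosSemidef) : ∃ M : Matrix n n ℂ, ρ = M * Mᴴ := by
  open scoped MatrixOrder in
  obtain ⟨M, hM⟩ := CStarAlgebra.nonneg_iff_eq_star_mul_self.1 hρ.nonneg
  exact ⟨Mᴴ, by rw [hM, conjTranspose_conjTranspose, star_eq_conjTranspose]⟩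

theorem trace_mul_nonneg_of_posSemidef (hρ : ρ.PosSemidef) (hσ : σ.PosSemidef) :
    0 ≤ (ρ * σ).trace := by
  obtain ⟨M, rfl⟩ := exists_eq_mul_conjTranspose hσ
  rw [← Matrix.mul_assoc, trace_mul_comm, ← Matrix.mul_assoc]
  exact (hρ.conjTranspose_mul_mul_same M).trace_nonneg

theorem mul_eq_zero_of_trace_mul_eq_zero (hρ : ρ.PosSemidef) (hσ : σ.PosSemidef)
    (h : (ρ * σ).trace = 0) : ρ * σ = 0 := by
  obtain ⟨M, rfl⟩ := exists_eq_mul_conjTranspose hρ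
  obtain ⟨N, rfl⟩ := exists_eq_mul_conjTranspose hσ
  have hMN : Mᴴ * N = 0 := by
    rw [← trace_mul_conjTranspose_self_eq_zero_iff, ← h, conjTranspose_mul,
      conjTranspose_conjTranspose, Matrix.mul_assoc M, trace_mul_comm M]
    simp only [Matrix.mul_assoc]
  rw [Matrix.mul_assoc, ← Matrix.mul_assoc Mᴴ, hMN, Matrix.zero_mul, Matrix.mul_zero]

end PositiveSemidefinite

section Support

variable {n : Type*} [Fintype n] [DecidableEq n] {ρ σ : Matrix n n ℂ}

/-- The orthogonal projection onto the kernel of the Hermitian matrix `σ`. -/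
def kernelProj (σ : Matrix n n ℂ) : Matrix n n ℂ :=
  cfc (fun x : ℝ => if x = 0 then 1 else 0) σ

theorem kernelProj_posSemidef (σ : Matrix n n ℂ) : (kernelProj σ).PosSemidef := by
  open scoped MatrixOrder in
  exact nonneg_iff_posSemidef.1 (cfc_nonneg fun x _ => by positivity)

theorem mul_kernelProj_self (hσ : σ.IsHermitian) : σ * kernelProj σ = 0 := by
  rw [kernelProj, mul_cfc_self hσ, ← cfc_const_zero ℝ σ]
  exact cfc_congr fun x _ => by simp

theorem kernelProj_mul_eq_self (hσ : σ.IsHermitian) {Q : Matrix n n ℂ} (hQ : σ * Q = 0) :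
    kernelProj σ * Q = Q := by
  have hmul : cfc (fun x : ℝ => x⁻¹) σ * σ = cfc (fun x : ℝ => x⁻¹ * x) σ := by
    rw [cfc_mul _ _ σ (continuousOn_spectrum_real _ σ) (continuousOn_spectrum_real _ σ),
      cfc_id' ℝ σ hσ.isSelfAdjoint]
  have hinv : kernelProj σ + cfc (fun x : ℝ => x⁻¹) σ * σ = 1 := by
    rw [hmul, kernelProj,
      ← cfc_add _ _ _ (continuousOn_spectrum_real _ σ) (continuousOn_spectrum_real _ σ),
      ← cfc_const_one ℝ σ hσ.isSelfAdjoint]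
    refine cfc_congr fun x _ => ?_
    by_cases hx : x = 0 <;> simp [hx]
  calc kernelProj σ * Q = (kernelProj σ + cfc (fun x : ℝ => x⁻¹) σ * σ) * Q := by
        rw [Matrix.add_mul, Matrix.mul_assoc, hQ, Matrix.mul_zero, add_zero]
    _ = Q := by rw [hinv, Matrix.one_mul]

/-- The support of `ρ` is contained in that of `σ`, i.e. `ker σ ⊆ ker ρ`; the inclusion of kernels
is stated for all columns of a matrix `Q` at once. -/
def SupportLE (ρ σ : Matrix n n ℂ) : Prop :=
  ∀ Q : Matrix n n ℂ, σ * Q = 0 → ρ * Q = 0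

theorem supportLE_iff_mul_kernelProj_eq_zero (hσ : σ.IsHermitian) :
    SupportLE ρ σ ↔ ρ * kernelProj σ = 0 := by
  refine ⟨fun h => h _ (mul_kernelProj_self hσ), fun h Q hQ => ?_⟩
  rw [← kernelProj_mul_eq_self hσ hQ, ← Matrix.mul_assoc, h, Matrix.zero_mul]

end Support

section NussbaumSzkola

variable {n : Type*} [Fintype n] [DecidableEq n] {ρ σ : Matrix n n ℂ}

/-- The Nussbaum–Szkoła weight `rᵢ |⟨uᵢ, vⱼ⟩|²` of a pair of eigenvectors `uᵢ` of `ρ` and `vⱼ` of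
`σ`, with `ρ uᵢ = rᵢ uᵢ`. -/
def nussbaumSzkola (hρ : ρ.IsHermitian) (hσ : σ.IsHermitian) (i j : n) : ℝ :=
  hρ.eigenvalues i * ‖eigenCoeff hρ hσ 1 i j‖ ^ 2

/-- The integral of `F(r, s)` over the eigenvalue pairs of `ρ` and `σ` against the Nussbaum–Szkoła
weights. It turns traces such as `Tr ρ log σ` into commutative averages. -/
def nussbaumSzkolaMean (hρ : ρ.IsHermitian) (hσ : σ.IsHermitian) (F : ℝ → ℝ → ℝ) : ℝ :=
  ∑ i, ∑ j, nussbaumSzkola hρ hσ i j * F (hρ.eigenvalues i) (hσ.eigenvalues j)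

theorem nussbaumSzkolaMean_mul (hρ : ρ.IsHermitian) (hσ : σ.IsHermitian) (f g : ℝ → ℝ) :
    nussbaumSzkolaMean hρ hσ (fun r s => f r * g s) = (ρ * cfc f ρ * cfc g σ).trace.re := by
  have h := trace_cfc_mul_mul_cfc_mul_conjTranspose hρ hσ (fun x => x * f x) g 1 1
  rw [conjTranspose_one, Matrix.mul_one, Matrix.mul_one] at h
  rw [mul_cfc_self hρ, h, nussbaumSzkolaMean, Complex.re_sum]
  refine Finset.sum_congr rfl fun i _ => ?_
  rw [Complex.re_sum]
  refine Finset.sum_congr rfl fun j _ => ?_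
  rw [Complex.star_def, Complex.mul_conj', nussbaumSzkola]
  norm_cast
  ring

theorem nussbaumSzkolaMean_fst (hρ : ρ.IsHermitian) (hσ : σ.IsHermitian) (f : ℝ → ℝ) :
    nussbaumSzkolaMean hρ hσ (fun r _ => f r) = (ρ * cfc f ρ).trace.re := by
  have h := nussbaumSzkolaMean_mul hρ hσ f fun _ => 1
  rwa [cfc_const_one ℝ σ hσ.isSelfAdjoint, Matrix.mul_one,
    funext₂ fun r _ => mul_one (f r)] at h

theorem nussbaumSzkolaMean_snd (hρ : ρ.IsHermitian) (hσ : σ.IsHermitian) (g : ℝ → ℝ) :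
    nussbaumSzkolaMean hρ hσ (fun _ s => g s) = (ρ * cfc g σ).trace.re := by
  have h := nussbaumSzkolaMean_mul hρ hσ (fun _ => 1) g
  rwa [cfc_const_one ℝ ρ hρ.isSelfAdjoint, Matrix.mul_one,
    funext₂ fun _ s => one_mul (g s)] at h

theorem nussbaumSzkolaMean_const (hρ : ρ.IsHermitian) (hσ : σ.IsHermitian) (c : ℝ) :
    nussbaumSzkolaMean hρ hσ (fun _ _ => c) = ρ.trace.re * c := by
  rw [nussbaumSzkolaMean_fst hρ hσ fun _ => c, cfc_const c ρ hρ.isSelfAdjoint,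
    ← Algebra.commutes, ← Algebra.smul_def, trace_smul, Complex.real_smul, Complex.re_ofReal_mul,
    mul_comm]

theorem nussbaumSzkola_nonneg (hρ : ρ.PosSemidef) (hσ : σ.IsHermitian) (i j : n) :
    0 ≤ nussbaumSzkola hρ.1 hσ i j :=
  mul_nonneg (hρ.eigenvalues_nonneg i) (sq_nonneg _)

theorem eigenvalues_pos_of_nussbaumSzkola_ne_zero (hρ : ρ.PosSemidef) (hσ : σ.PosSemidef)
    (hρσ : SupportLE ρ σ) {i j : n} (hij : nussbaumSzkola hρ.1 hσ.1 i j ≠ 0) :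
    0 < hρ.1.eigenvalues i ∧ 0 < hσ.1.eigenvalues j := by
  refine ⟨(hρ.eigenvalues_nonneg i).lt_of_ne' (left_ne_zero_of_mul hij),
    (hσ.eigenvalues_nonneg j).lt_of_ne' fun hj => hij ?_⟩
  have hmean : nussbaumSzkolaMean hρ.1 hσ.1 (fun _ s => if s = 0 then 1 else 0) = 0 := by
    rw [nussbaumSzkolaMean_snd hρ.1 hσ.1 fun s => if s = 0 then 1 else 0, ← kernelProj,
      (supportLE_iff_mul_kernelProj_eq_zero hσ.1).1 hρσ, trace_zero, Complex.zero_re]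
  have hnonneg (k l : n) : 0 ≤ nussbaumSzkola hρ.1 hσ.1 k l
      * if hσ.1.eigenvalues l = 0 then 1 else 0 :=
    mul_nonneg (nussbaumSzkola_nonneg hρ hσ.1 k l) (by positivity)
  have hrow := (Finset.sum_eq_zero_iff_of_nonneg fun k _ =>
    Finset.sum_nonneg fun l _ => hnonneg k l).1 hmean i (Finset.mem_univ i)
  simpa [hj] using (Finset.sum_eq_zero_iff_of_nonneg fun l _ => hnonneg i l).1 hrow j
    (Finset.mem_univ j)

/-- The Nussbaum–Szkoła mean of `log (s + t * r)`: it equals `Tr ρ log σ` at `t = 0` and tends to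
`Tr ρ log ρ` as `t → ∞`, up to the term `Tr ρ * log t`. -/
def logMean (hρ : ρ.IsHermitian) (hσ : σ.IsHermitian) (t : ℝ) : ℝ :=
  nussbaumSzkolaMean hρ hσ fun r s => Real.log (s + t * r)

/-- The quasi-entropy of `ρ` and `σ` for the function `(r, s) ↦ r / (s + t * r)`, in which terms
with vanishing denominator count as zero. -/
def quasiEntropy (hρ : ρ.IsHermitian) (hσ : σ.IsHermitian) (t : ℝ) : ℝ :=
  nussbaumSzkolaMean hρ hσ fun r s => r / (s + t * r)

theorem logMean_zero (hρ : ρ.IsHermitian) (hσ : σ.IsHermitian) :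
    logMean hρ hσ 0 = (ρ * cfc Real.log σ).trace.re := by
  simp only [logMean, zero_mul, add_zero, nussbaumSzkolaMean_snd]

theorem hasDerivAt_logMean (hρ : ρ.PosSemidef) (hσ : σ.PosSemidef)
    (hρσ : SupportLE ρ σ) {t : ℝ} (ht : 0 ≤ t) :
    HasDerivAt (logMean hρ.1 hσ.1) (quasiEntropy hρ.1 hσ.1 t) t := by
  refine HasDerivAt.fun_sum fun i _ => HasDerivAt.fun_sum fun j _ => ?_
  by_cases hij : nussbaumSzkola hρ.1 hσ.1 i j = 0
  · simpa only [hij, zero_mul] using hasDerivAt_const t (0 : ℝ)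
  obtain ⟨hr, hs⟩ := eigenvalues_pos_of_nussbaumSzkola_ne_zero hρ hσ hρσ hij
  have hline : HasDerivAt (fun t => hσ.1.eigenvalues j + t * hρ.1.eigenvalues i)
      (hρ.1.eigenvalues i) t := by
    simpa using ((hasDerivAt_id t).mul_const (hρ.1.eigenvalues i)).const_add (hσ.1.eigenvalues j)
  exact (hline.log (by positivity)).const_mul _

theorem tendsto_log_add_mul_sub_log {r : ℝ} (hr : 0 < r) {s : ℝ} (hs : 0 < s) :
    Filter.Tendsto (fun t => Real.log (s + t * r) - Real.log t) Filter.atTop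
      (nhds (Real.log r)) := by
  have h : Filter.Tendsto (fun t : ℝ => s * t⁻¹ + r) Filter.atTop (nhds r) := by
    simpa using (tendsto_inv_atTop_zero.const_mul s).add_const r
  refine (h.log hr.ne').congr' ?_
  filter_upwards [Filter.eventually_gt_atTop 0] with t ht
  rw [← Real.log_div (by positivity) ht.ne']
  congr 1
  field_simp

theorem tendsto_logMean (hρ : ρ.PosSemidef) (hσ : σ.PosSemidef)
    (hρσ : SupportLE ρ σ) :
    Filter.Tendsto (fun t => logMean hρ.1 hσ.1 t - ρ.trace.re * Real.log t) Filter.atTop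
      (nhds (ρ * cfc Real.log ρ).trace.re) := by
  simp only [← nussbaumSzkolaMean_fst hρ.1 hσ.1 Real.log,
    ← nussbaumSzkolaMean_const hρ.1 hσ.1 (Real.log _), logMean, nussbaumSzkolaMean,
    ← Finset.sum_sub_distrib, ← mul_sub]
  refine tendsto_finsetSum _ fun i _ => tendsto_finsetSum _ fun j _ => ?_
  by_cases hij : nussbaumSzkola hρ.1 hσ.1 i j = 0
  · simp only [hij, zero_mul, tendsto_const_nhds]
  obtain ⟨hr, hs⟩ := eigenvalues_pos_of_nussbaumSzkola_ne_zero hρ hσ hρσ hij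
  exact (tendsto_log_add_mul_sub_log hr hs).const_mul _

end NussbaumSzkola

section QuasiEntropy

variable {n : Type*} [Fintype n] [DecidableEq n] {ρ σ : Matrix n n ℂ}

/-- The quadratic functional of `K` whose maximum is the quasi-entropy of `ρ` and `σ`. -/
def quasiForm (t : ℝ) (ρ σ K : Matrix n n ℂ) : ℝ :=
  2 * (ρ * Kᴴ).trace.re - (σ * (Kᴴ * K)).trace.re - t * (ρ * (K * Kᴴ)).trace.re

theorem quasiForm_eq_sum (hρ : ρ.IsHermitian) (hσ : σ.IsHermitian) (t : ℝ) (K : Matrix n n ℂ) :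
    quasiForm t ρ σ K = ∑ i, ∑ j,
      (2 * (hρ.eigenvalues i * (eigenCoeff hρ hσ 1 i j * star (eigenCoeff hρ hσ K i j)).re)
        - (hσ.eigenvalues j + t * hρ.eigenvalues i) * ‖eigenCoeff hρ hσ K i j‖ ^ 2) := by
  have hlin := trace_cfc_mul_mul_cfc_mul_conjTranspose hρ hσ (fun x => x) (fun _ => 1) 1 K
  have hsq := trace_cfc_mul_mul_cfc_mul_conjTranspose hρ hσ (fun x => x) (fun _ => 1) K K
  have hsq' := trace_cfc_mul_mul_cfc_mul_conjTranspose hρ hσ (fun _ => 1) (fun x => x) K K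
  rw [cfc_id' ℝ ρ hρ.isSelfAdjoint, cfc_const_one ℝ σ hσ.isSelfAdjoint, Matrix.mul_one] at hlin hsq
  rw [cfc_id' ℝ σ hσ.isSelfAdjoint, cfc_const_one ℝ ρ hρ.isSelfAdjoint, Matrix.one_mul,
    Matrix.mul_assoc, trace_mul_comm, Matrix.mul_assoc] at hsq'
  rw [Matrix.mul_one] at hlin
  rw [Matrix.mul_assoc] at hsq
  simp only [quasiForm, hlin, hsq, hsq', Complex.star_def, Complex.mul_conj', Complex.re_sum,
    Finset.mul_sum, ← Finset.sum_sub_distrib, Complex.ofReal_one, mul_one, one_mul,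
    Complex.re_ofReal_mul]
  refine Finset.sum_congr rfl fun i _ => Finset.sum_congr rfl fun j _ => ?_
  norm_cast
  ring

theorem two_mul_re_sub_mul_norm_sq {r d : ℝ} (hd : d = 0 → r = 0) (w z : ℂ) :
    2 * (r * (w * star z).re) - d * ‖z‖ ^ 2
      = r * ‖w‖ ^ 2 * (r / d) - d * ‖z - (r / d : ℝ) * w‖ ^ 2 := by
  by_cases h : d = 0
  · simp [h, hd h]
  simp only [Complex.sq_norm, Complex.normSq_apply, Complex.star_def, Complex.mul_re,
    Complex.mul_im, Complex.sub_re, Complex.sub_im, Complex.conj_re, Complex.conj_im,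
    Complex.ofReal_re, Complex.ofReal_im]
  field_simp
  ring

theorem isGreatest_quasiForm (hρ : ρ.PosSemidef) (hσ : σ.PosSemidef) {t : ℝ} (ht : 0 < t) :
    IsGreatest (Set.range (quasiForm t ρ σ))
      (quasiEntropy hρ.1 hσ.1 t) := by
  have hd (i j : n) : 0 ≤ hσ.1.eigenvalues j + t * hρ.1.eigenvalues i :=
    add_nonneg (hσ.eigenvalues_nonneg j) (mul_nonneg ht.le (hρ.eigenvalues_nonneg i))
  have hd_zero (i j : n) (h : hσ.1.eigenvalues j + t * hρ.1.eigenvalues i = 0) :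
      hρ.1.eigenvalues i = 0 := by
    nlinarith [hσ.eigenvalues_nonneg j, hρ.eigenvalues_nonneg i]
  have hsum (K : Matrix n n ℂ) := quasiForm_eq_sum hρ.1 hσ.1 t K
  simp only [two_mul_re_sub_mul_norm_sq (hd_zero _ _)] at hsum
  constructor
  · obtain ⟨K, hK⟩ := eigenCoeff_surjective hρ.1 hσ.1 (of fun i j => ((hρ.1.eigenvalues i
      / (hσ.1.eigenvalues j + t * hρ.1.eigenvalues i) : ℝ) : ℂ) * eigenCoeff hρ.1 hσ.1 1 i j)
    refine ⟨K, ?_⟩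
    simp only [hsum, hK, of_apply, sub_self, norm_zero, ne_eq, OfNat.ofNat_ne_zero,
      not_false_eq_true, zero_pow, mul_zero, sub_zero]
    rfl
  · rintro _ ⟨K, rfl⟩
    rw [hsum]
    exact Finset.sum_le_sum fun i _ => Finset.sum_le_sum fun j _ =>
      sub_le_self _ (mul_nonneg (hd i j) (sq_nonneg _))

end QuasiEntropy

section Restriction

variable {m n : Type*} [Fintype m] [DecidableEq m] [Fintype n] [DecidableEq n]
  {ι : Matrix n n ℂ →⋆ₐ[ℂ] Matrix m m ℂ} {ρ σ : Matrix m m ℂ} {ρ' σ' : Matrix n n ℂ}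

/-- `ρ'` is the density matrix, with respect to the trace, of the functional `X ↦ Tr (ρ ι(X))`:
the restriction of `ρ` to the subalgebra embedded by `ι`. Partial traces are the case where `ι`
tensors with an identity. -/
def IsRestriction (ι : Matrix n n ℂ →⋆ₐ[ℂ] Matrix m m ℂ) (ρ : Matrix m m ℂ)
    (ρ' : Matrix n n ℂ) : Prop :=
  ∀ X, (ρ * ι X).trace = (ρ' * X).trace

theorem starAlgHom_map_posSemidef (ι : Matrix n n ℂ →⋆ₐ[ℂ] Matrix m m ℂ) (hρ' : ρ'.PosSemidef) :
    (ι ρ').PosSemidef := by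
  obtain ⟨M, rfl⟩ := exists_eq_mul_conjTranspose hρ'
  rw [map_mul, ← star_eq_conjTranspose, map_star]
  exact posSemidef_self_mul_conjTranspose _

namespace IsRestriction

theorem trace_eq (h : IsRestriction ι ρ ρ') : ρ.trace = ρ'.trace := by
  simpa only [map_one, Matrix.mul_one] using h 1

theorem isHermitian (h : IsRestriction ι ρ ρ') (hρ : ρ.IsHermitian) : ρ'.IsHermitian := by
  refine Matrix.ext_iff_trace_mul_right.2 fun X => ?_
  calc (ρ'ᴴ * X).trace = star (ρ' * Xᴴ).trace := by
        rw [← trace_conjTranspose, conjTranspose_mul, conjTranspose_conjTranspose, trace_mul_comm]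
    _ = star (ρ * (ι X)ᴴ).trace := by rw [← h, ← star_eq_conjTranspose, map_star]; rfl
    _ = (ρ * ι X).trace := by
        rw [← trace_conjTranspose, conjTranspose_mul, conjTranspose_conjTranspose, hρ.eq,
          trace_mul_comm]
    _ = (ρ' * X).trace := h X

theorem posSemidef (h : IsRestriction ι ρ ρ') (hρ : ρ.PosSemidef) : ρ'.PosSemidef := by
  refine .of_dotProduct_mulVec_nonneg (h.isHermitian hρ.1) fun x => ?_
  rw [dotProduct_comm, ← trace_vecMulVec, ← mul_vecMulVec, ← h]
  exact trace_mul_nonneg_of_posSemidef hρ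
    (starAlgHom_map_posSemidef ι (posSemidef_vecMulVec_self_star x))

theorem quasiForm_map (hρ : IsRestriction ι ρ ρ') (hσ : IsRestriction ι σ σ') (t : ℝ)
    (K : Matrix n n ℂ) : quasiForm t ρ σ (ι K) = quasiForm t ρ' σ' K := by
  simp only [quasiForm, ← star_eq_conjTranspose, ← map_star, ← map_mul, hρ _, hσ _]

theorem mul_map_eq_zero_iff (h : IsRestriction ι ρ ρ') (hρ : ρ.PosSemidef) {P : Matrix n n ℂ}
    (hP : P.PosSemidef) : ρ * ι P = 0 ↔ ρ' * P = 0 := by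
  constructor <;> intro h0
  · exact mul_eq_zero_of_trace_mul_eq_zero (h.posSemidef hρ) hP (by rw [← h, h0, trace_zero])
  · exact mul_eq_zero_of_trace_mul_eq_zero hρ (starAlgHom_map_posSemidef ι hP)
      (by rw [h, h0, trace_zero])

theorem supportLE (hρ : IsRestriction ι ρ ρ') (hσ : IsRestriction ι σ σ') (hρ_psd : ρ.PosSemidef)
    (hσ_psd : σ.PosSemidef) (hρσ : SupportLE ρ σ) : SupportLE ρ' σ' := by
  have hσ'_herm := (hσ.posSemidef hσ_psd).1
  have hP := kernelProj_posSemidef σ'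
  rw [supportLE_iff_mul_kernelProj_eq_zero hσ'_herm, ← hρ.mul_map_eq_zero_iff hρ_psd hP]
  exact hρσ _ ((hσ.mul_map_eq_zero_iff hσ_psd hP).2 (mul_kernelProj_self hσ'_herm))

theorem supportLE_map (h : IsRestriction ι ρ ρ') (hρ : ρ.PosSemidef) : SupportLE ρ (ι ρ') := by
  have hρ' := h.posSemidef hρ
  rw [supportLE_iff_mul_kernelProj_eq_zero (starAlgHom_map_posSemidef ι hρ').1, kernelProj,
    ← starAlgHom_map_cfc ι hρ'.1, ← kernelProj,
    h.mul_map_eq_zero_iff hρ (kernelProj_posSemidef ρ')]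
  exact mul_kernelProj_self hρ'.1

theorem quasiEntropy_le (hρ : IsRestriction ι ρ ρ') (hσ : IsRestriction ι σ σ')
    (hρ_psd : ρ.PosSemidef) (hσ_psd : σ.PosSemidef) {t : ℝ} (ht : 0 < t) :
    quasiEntropy (hρ.posSemidef hρ_psd).1 (hσ.posSemidef hσ_psd).1 t
      ≤ quasiEntropy hρ_psd.1 hσ_psd.1 t := by
  obtain ⟨K, hK⟩ := (isGreatest_quasiForm (hρ.posSemidef hρ_psd) (hσ.posSemidef hσ_psd) ht).1
  rw [← hK, ← hρ.quasiForm_map hσ]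
  exact (isGreatest_quasiForm hρ_psd hσ_psd ht).2 ⟨ι K, rfl⟩

end IsRestriction

/-- The relative entropy `Tr ρ (log ρ - log σ)`, in nats. Since `Real.log 0 = 0`, this is the usual
quantity only when `SupportLE ρ σ`. -/
def relEntropy (ρ σ : Matrix n n ℂ) : ℝ :=
  (ρ * cfc Real.log ρ).trace.re - (ρ * cfc Real.log σ).trace.re

namespace IsRestriction

theorem monotoneOn_logMean_sub_logMean (hρ : IsRestriction ι ρ ρ')
    (hσ : IsRestriction ι σ σ') (hρ_psd : ρ.PosSemidef) (hσ_psd : σ.PosSemidef)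
    (hρσ : SupportLE ρ σ) :
    MonotoneOn (logMean hρ_psd.1 hσ_psd.1
      - logMean (hρ.posSemidef hρ_psd).1 (hσ.posSemidef hσ_psd).1) (Set.Ici 0) := by
  have hderiv (t : ℝ) (ht : 0 ≤ t) := (hasDerivAt_logMean hρ_psd hσ_psd hρσ ht).sub
    (hasDerivAt_logMean (hρ.posSemidef hρ_psd) (hσ.posSemidef hσ_psd)
      (hρ.supportLE hσ hρ_psd hσ_psd hρσ) ht)
  refine monotoneOn_of_hasDerivWithinAt_nonneg (convex_Ici 0)
    (fun t ht => (hderiv t ht).continuousAt.continuousWithinAt)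
    (fun t ht => (hderiv t (interior_subset ht)).hasDerivWithinAt) fun t ht => ?_
  rw [interior_Ici] at ht
  exact sub_nonneg.2 (hρ.quasiEntropy_le hσ hρ_psd hσ_psd ht)

theorem relEntropy_le (hρ : IsRestriction ι ρ ρ') (hσ : IsRestriction ι σ σ')
    (hρ_psd : ρ.PosSemidef) (hσ_psd : σ.PosSemidef) (hρσ : SupportLE ρ σ) :
    relEntropy ρ' σ' ≤ relEntropy ρ σ := by
  have hmono := hρ.monotoneOn_logMean_sub_logMean hσ hρ_psd hσ_psd hρσ
  have hlim := (tendsto_logMean hρ_psd hσ_psd hρσ).sub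
    (tendsto_logMean (hρ.posSemidef hρ_psd) (hσ.posSemidef hσ_psd)
      (hρ.supportLE hσ hρ_psd hσ_psd hρσ))
  simp only [hρ.trace_eq, sub_sub_sub_cancel_right] at hlim
  have hzero_le := ge_of_tendsto hlim (Filter.eventually_ge_atTop 0 |>.mono fun t ht =>
    hmono Set.self_mem_Ici (Set.mem_Ici.2 ht) ht)
  rw [Pi.sub_apply, logMean_zero, logMean_zero] at hzero_le
  rw [relEntropy, relEntropy]
  linarith

theorem relEntropy_map (h : IsRestriction ι ρ ρ') (hρ : ρ.PosSemidef) :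
    relEntropy ρ (ι ρ') = Real.log 2 * (vonNeumannEntropy ρ' - vonNeumannEntropy ρ) := by
  have hρ' := (h.posSemidef hρ).1
  rw [relEntropy, ← starAlgHom_map_cfc ι hρ', h, mul_sub, log_two_mul_vonNeumannEntropy hρ.1,
    log_two_mul_vonNeumannEntropy hρ']
  ring

end IsRestriction

end Restriction

section Marginal

theorem trace_mul_submatrix_equiv {m n : Type*} [Fintype m] [Fintype n] (e : m ≃ n)
    (M : Matrix m m ℂ) (N : Matrix n n ℂ) :
    (M * N.submatrix e e).trace = (M.submatrix e.symm e.symm * N).trace := by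
  simp only [trace, diag_apply, Matrix.mul_apply, submatrix_apply]
  rw [← e.symm.sum_comp]
  refine Finset.sum_congr rfl fun i _ => ?_
  rw [← e.symm.sum_comp]
  simp only [Equiv.apply_symm_apply]

variable {m n κ : Type*} [Fintype m] [DecidableEq m] [Fintype n] [DecidableEq n] [Fintype κ]
  [DecidableEq κ]

/-- The embedding `X ↦ X ⊗ 1` of the observables of a tensor factor, the ambient index type being
identified with a product through `e`. -/
def ampliation (e : m ≃ n × κ) : Matrix n n ℂ →⋆ₐ[ℂ] Matrix m m ℂ where
  toFun X := (X ⊗ₖ (1 : Matrix κ κ ℂ)).submatrix e e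
  map_one' := by rw [one_kronecker_one, submatrix_one_equiv]
  map_mul' X Y := by rw [submatrix_mul_equiv, ← mul_kronecker_mul, Matrix.one_mul]
  map_zero' := by rw [zero_kronecker, submatrix_zero]; rfl
  map_add' X Y := by rw [add_kronecker, submatrix_add]; rfl
  commutes' c := by
    simp only [Algebra.algebraMap_eq_smul_one, smul_kronecker, one_kronecker_one, submatrix_smul,
      Pi.smul_apply, submatrix_one_equiv]
  map_star' X := by
    simp only [star_eq_conjTranspose, conjTranspose_submatrix, conjTranspose_kronecker,
      conjTranspose_one]

/-- The partial trace over `κ`, the ambient index type being identified with `n × κ` through `e`. -/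
def marginal (e : m ≃ n × κ) (ρ : Matrix m m ℂ) : Matrix n n ℂ :=
  fun i j => ∑ k, ρ (e.symm (i, k)) (e.symm (j, k))

theorem isRestriction_marginal (e : m ≃ n × κ) (ρ : Matrix m m ℂ) :
    IsRestriction (ampliation e) ρ (marginal e ρ) := by
  intro X
  change (ρ * (X ⊗ₖ (1 : Matrix κ κ ℂ)).submatrix e e).trace = _
  rw [trace_mul_submatrix_equiv]
  simp only [trace, diag_apply, Matrix.mul_apply, submatrix_apply, kroneckerMap_apply,
    Fintype.sum_prod_type, one_apply, mul_ite, mul_one, mul_zero, Finset.sum_ite_eq',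
    Finset.mem_univ, if_true, marginal, Finset.sum_mul]
  exact Finset.sum_congr rfl fun i _ => Finset.sum_comm

theorem isRestriction_margAB (ρ : Matrix (A × B × E) (A × B × E) ℂ) :
    IsRestriction (ampliation (Equiv.prodAssoc A B E).symm) ρ (margAB ρ) :=
  isRestriction_marginal _ ρ

theorem isRestriction_ptraceL (ρ : Matrix (A × B) (A × B) ℂ) :
    IsRestriction (ampliation (Equiv.prodComm A B)) ρ (ptraceL ρ) :=
  isRestriction_marginal _ ρ

theorem trace_margAB (ρ : Matrix (A × B × E) (A × B × E) ℂ) : (margAB ρ).trace = ρ.trace :=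
  (isRestriction_margAB ρ).trace_eq.symm

end Marginal

section EntropyInequalities

theorem margAB_ampliation_margBE (ρ : Matrix (A × B × E) (A × B × E) ℂ) :
    margAB (ampliation (Equiv.prodComm A (B × E)) (margBE ρ))
      = ampliation (Equiv.prodComm A B) (ptraceL (margAB ρ)) := by
  ext x y
  change ∑ e, margBE ρ (x.2, e) (y.2, e) * (1 : Matrix A A ℂ) x.1 y.1
    = ptraceL (margAB ρ) x.2 y.2 * (1 : Matrix A A ℂ) x.1 y.1
  rw [← Finset.sum_mul]
  exact congrArg (· * _) Finset.sum_comm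

theorem strong_subadditivity {ρ : Matrix (A × B × E) (A × B × E) ℂ} (hρ : ρ.PosSemidef) :
    vonNeumannEntropy ρ + vonNeumannEntropy (ptraceL (margAB ρ))
      ≤ vonNeumannEntropy (margAB ρ) + vonNeumannEntropy (margBE ρ) := by
  have hAB := isRestriction_margAB ρ
  have hBE : IsRestriction (ampliation (Equiv.prodComm A (B × E))) ρ (margBE ρ) :=
    isRestriction_ptraceL ρ
  have hσ := isRestriction_margAB (ampliation (Equiv.prodComm A (B × E)) (margBE ρ))
  have hmono := hAB.relEntropy_le hσ hρ
    (starAlgHom_map_posSemidef _ (hBE.posSemidef hρ)) (hBE.supportLE_map hρ)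
  rw [margAB_ampliation_margBE, hBE.relEntropy_map hρ,
    (isRestriction_ptraceL (margAB ρ)).relEntropy_map (hAB.posSemidef hρ)] at hmono
  linarith [le_of_mul_le_mul_left hmono (Real.log_pos one_lt_two)]

theorem weak_monotonicity {ρ : Matrix (A × B × E) (A × B × E) ℂ} (hρ : ρ.PosSemidef) :
    vonNeumannEntropy (margE ρ) + vonNeumannEntropy (ptraceL (margAB ρ))
      ≤ vonNeumannEntropy (margAB ρ) + vonNeumannEntropy (margAE ρ) := by
  obtain ⟨M, rfl⟩ := exists_eq_mul_conjTranspose hρ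
  -- The columns of `M` form a purification of `ρ` with a fourth factor `F = A × B × E`; `K` and `L`
  -- are its matrices for the bipartitions `ABF|E` and `BF|AE`.
  let K : Matrix (A × B × (A × B × E)) E ℂ := of fun x e => M (x.1, x.2.1, e) x.2.2
  let L : Matrix (B × (A × B × E)) (A × E) ℂ := of fun x y => M (y.1, x.1, y.2) x.2
  have hE : (Kᴴ * K)ᵀ = margE (M * Mᴴ) := by
    ext e e'
    simp only [K, Matrix.mul_apply, conjTranspose_apply, of_apply, transpose_apply, margE,
      Fintype.sum_prod_type (α₁ := A), Fintype.sum_prod_type (α₁ := B), mul_comm]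
  have hAE : (Lᴴ * L)ᵀ = margAE (M * Mᴴ) := by
    ext x y
    simp only [L, Matrix.mul_apply, conjTranspose_apply, of_apply, transpose_apply, margAE,
      Fintype.sum_prod_type (α₁ := B), mul_comm]
  have hAB : margAB (K * Kᴴ) = margAB (M * Mᴴ) := by
    ext x y
    exact Finset.sum_comm
  have hBF : margBE (K * Kᴴ) = L * Lᴴ := by
    ext x y
    exact (Fintype.sum_prod_type fun z => L x z * star (L y z)).symm
  have hssa := strong_subadditivity (posSemidef_self_mul_conjTranspose K)
  rwa [hAB, hBF, ← vonNeumannEntropy_transpose_conjTranspose_mul K, hE,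
    ← vonNeumannEntropy_transpose_conjTranspose_mul L, hAE] at hssa

theorem two_mul_entropy_ptraceL_sub_le_condMutualInfo {ρ : Matrix (A × B × E) (A × B × E) ℂ}
    (hρ : ρ.PosSemidef) :
    2 * (vonNeumannEntropy (ptraceL (margAB ρ)) - vonNeumannEntropy (margAB ρ))
      ≤ condMutualInfo ρ := by
  rw [condMutualInfo]
  linarith [strong_subadditivity hρ, weak_monotonicity hρ]

/-- The exchange of the roles of `A` and `B` in a tripartite index type. -/
def swapFirstTwo (A B E : Type*) : B × A × E ≃ A × B × E where
  toFun x := (x.2.1, x.1, x.2.2)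
  invFun x := (x.2.1, x.1, x.2.2)

theorem condMutualInfo_swap {ρ : Matrix (A × B × E) (A × B × E) ℂ} (hρ : ρ.IsHermitian) :
    condMutualInfo (ρ.submatrix (swapFirstTwo A B E) (swapFirstTwo A B E)) = condMutualInfo ρ := by
  have hE : margE (ρ.submatrix (swapFirstTwo A B E) (swapFirstTwo A B E)) = margE ρ := by
    ext x y
    exact Finset.sum_comm
  have hAE : margAE (ρ.submatrix (swapFirstTwo A B E) (swapFirstTwo A B E)) = margBE ρ := rfl
  have hBE : margBE (ρ.submatrix (swapFirstTwo A B E) (swapFirstTwo A B E)) = margAE ρ := rfl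
  rw [condMutualInfo, condMutualInfo, hE, hAE, hBE, vonNeumannEntropy_submatrix_equiv _ hρ,
    add_comm (vonNeumannEntropy (margAE ρ))]

theorem two_mul_entropy_ptraceR_sub_le_condMutualInfo {ρ : Matrix (A × B × E) (A × B × E) ℂ}
    (hρ : ρ.PosSemidef) :
    2 * (vonNeumannEntropy (ptraceR (margAB ρ)) - vonNeumannEntropy (margAB ρ))
      ≤ condMutualInfo ρ := by
  have hswap := two_mul_entropy_ptraceL_sub_le_condMutualInfo (hρ.submatrix (swapFirstTwo A B E))
  have hAB : margAB (ρ.submatrix (swapFirstTwo A B E) (swapFirstTwo A B E))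
    = (margAB ρ).submatrix (Equiv.prodComm B A) (Equiv.prodComm B A) := rfl
  rwa [condMutualInfo_swap hρ.1, hAB,
    vonNeumannEntropy_submatrix_equiv _ ((isRestriction_margAB ρ).posSemidef hρ).1] at hswap

theorem exists_extension {ρ : Matrix (A × B) (A × B) ℂ} (hρ : IsState ρ) :
    ∃ ρE : Matrix (A × B × Fin 1) (A × B × Fin 1) ℂ, IsState ρE ∧ margAB ρE = ρ := by
  let ρE : Matrix (A × B × Fin 1) (A × B × Fin 1) ℂ :=
    ρ.submatrix (fun x => (x.1, x.2.1)) fun x => (x.1, x.2.1)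
  have hAB : margAB ρE = ρ := by
    ext x y
    exact Fintype.sum_unique _
  refine ⟨ρE, ⟨hρ.1.submatrix _, ?_⟩, hAB⟩
  rw [← trace_margAB, hAB, hρ.2]

end EntropyInequalities

/-- For every state `ρ^{AB}`,
`(1/2)(I(A;B) - S(AB)) ≤ E_sq(ρ^{AB})`, where `I(A;B) = S(A) + S(B) - S(AB)`. -/
theorem half_mutualInfo_sub_entropy_le_squashedEntanglement
    {A B : Type*} [Fintype A] [Fintype B]
    (ρ : Matrix (A × B) (A × B) ℂ) (hρ : IsState ρ) :
    (1 / 2) * ((vonNeumannEntropy (ptraceR ρ) + vonNeumannEntropy (ptraceL ρ)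
        - vonNeumannEntropy ρ) - vonNeumannEntropy ρ)
      ≤ Esq ρ := by
  refine le_csInf ?_ ?_
  · obtain ⟨ρE, hstate, hAB⟩ := exists_extension hρ
    exact ⟨_, 1, ρE, hstate, hAB, rfl⟩
  · rintro _ ⟨d, ρE, hstate, rfl, rfl⟩
    linarith [two_mul_entropy_ptraceR_sub_le_condMutualInfo hstate.1,
      two_mul_entropy_ptraceL_sub_le_condMutualInfo hstate.1]

end
end

section
/- Fannes-type inequality for the conditional entropy of states classical on B: let ρ^{AB} = ∑_k p_k ρ_k ⊗ |k⟩⟨k| and σ^{AB} = ∑_k q_k σ_k ⊗ |k⟩⟨k| be states on H_A ⊗ H_B, where (|k⟩)_k is a fixed orthonormal basis of H_B, (p_k) and (q_k) are probability distributions, and ρ_k, σ_k are states on H_A. If ‖ρ^{AB} - σ^{AB}‖₁ ≤ ε, then |S(A|B)_ρ - S(A|B)_σ| ≤ η(2ε) + 3ε log₂ d_A, where d_A = dim H_A, S(A|B) = S(AB) - S(B) is the conditional von Neumann entropy, and η(x) = -x log₂ x for x ≤ 1/4 and η(x) = 1/2 otherwise. -/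
open Matrix BigOperators Kronecker
open scoped Classical ComplexOrder

noncomputable section

variable {A B E : Type*} [Fintype A] [Fintype B] [Fintype E]

/-- A state on `A × B` which is classical on `B` with respect to the standard basis:
`∑_k p_k ρ_k ⊗ |k⟩⟨k|`. -/
def classicalOnB {A B : Type*} [DecidableEq B]
    (p : B → ℝ) (ρs : B → Matrix A A ℂ) : Matrix (A × B) (A × B) ℂ :=
  fun x y => if x.2 = y.2 then (p x.2 : ℂ) * ρs x.2 x.1 y.1 else 0

/-- The conditional von Neumann entropy `S(A|B) = S(AB) - S(B)`. -/
def condEntropyA {A B : Type*} [Fintype A] [Fintype B]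
    (ρ : Matrix (A × B) (A × B) ℂ) : ℝ :=
  vonNeumannEntropy ρ - vonNeumannEntropy (ptraceL ρ)

/-!
In terms of the unnormalised entropy `homEntropy X = Tr X * S(X / Tr X)`, a state `⨁ k, X k` that is
classical on `B` has `S(A|B) = ∑ k, homEntropy (X k)`. Write `X k - Y k = P k - N k` with `P k` and
`N k` positive, so that `X k + N k = Y k + P k`. Concavity of the entropy bounds the entropy of the
left side below by that of `X k`; the Rotfeld inequality bounds that of the right side above by the
entropies of `Y k` and `P k` plus a mixing term. Summing over `k`, with `T` half the trace norm
distance and `h` the binary entropy, gives `|ΔS(A|B)| ≤ T log d + (1 + T) h(T / (1 + T))`.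
If `d ≥ 2` and `ε ≤ 1 / 3` this is stronger than the claimed bound, and otherwise the claim follows
from `0 ≤ S(A|B) ≤ log d`.
-/

open Real (negMulLog log logb)

section Scalar

lemma negMulLog_le_tangent {t c : ℝ} (ht : 0 ≤ t) (hc : 0 < c) :
    negMulLog t ≤ -(t * log c) + c - t := by
  have h := mul_le_mul_of_nonneg_left
    (Real.negMulLog_le_one_sub_self (div_nonneg ht hc.le)) hc.le
  have hsplit : negMulLog t = t / c * negMulLog c + c * negMulLog (t / c) := by
    rw [← Real.negMulLog_mul, mul_div_cancel₀ t hc.ne']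
  have hlin : t / c * negMulLog c + c * (1 - t / c) = -(t * log c) + c - t := by
    rw [negMulLog]
    field_simp
    ring
  linarith

lemma negMulLog_monotoneOn : MonotoneOn negMulLog (Set.Icc 0 (Real.exp (-1))) := by
  rintro t ⟨ht, -⟩ c ⟨-, hc⟩ htc
  rcases (ht.trans htc).eq_or_lt with rfl | hc0
  · rw [le_antisymm htc ht]
  have hlog : log c ≤ -1 := (Real.log_le_iff_le_exp hc0).2 hc
  have htangent := negMulLog_le_tangent ht hc0
  have hslope : 0 ≤ (c - t) * (-1 - log c) := mul_nonneg (by linarith) (by linarith)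
  simp only [negMulLog] at htangent ⊢
  linarith

lemma negMulLog_sum_le {ι : Type*} {s : Finset ι} {a : ι → ℝ} (ha : ∀ i ∈ s, 0 ≤ a i) :
    negMulLog (∑ i ∈ s, a i) ≤ ∑ i ∈ s, negMulLog (a i) := by
  have hsplit : negMulLog (∑ i ∈ s, a i) = ∑ i ∈ s, -(a i) * log (∑ i ∈ s, a i) := by
    rw [← Finset.sum_mul, Finset.sum_neg_distrib, negMulLog]
  rw [hsplit]
  refine Finset.sum_le_sum fun i hi => ?_
  rcases (ha i hi).eq_or_lt with h | h
  · simp [← h]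
  · exact mul_le_mul_of_nonpos_left
      (Real.log_le_log h (Finset.single_le_sum ha hi)) (neg_nonpos.2 h.le)

lemma sum_negMulLog_le {ι : Type*} {s : Finset ι} {a : ι → ℝ} (ha : ∀ i ∈ s, 0 ≤ a i) :
    ∑ i ∈ s, negMulLog (a i) ≤ negMulLog (∑ i ∈ s, a i) + (∑ i ∈ s, a i) * log s.card := by
  rcases s.eq_empty_or_nonempty with rfl | hs
  · simp
  have hcard : (0 : ℝ) < s.card := by exact_mod_cast hs.card_pos
  have hjensen := Real.concaveOn_negMulLog.le_map_sum (t := s) (w := fun _ => (s.card : ℝ)⁻¹)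
    (fun _ _ => by positivity) (by simp [hcard.ne']) ha
  simp only [smul_eq_mul, ← Finset.mul_sum] at hjensen
  rw [Real.negMulLog_mul, inv_mul_le_iff₀ hcard] at hjensen
  refine hjensen.trans_eq ?_
  rw [negMulLog, Real.log_inv]
  field_simp
  ring

/-- The entropy gained by merging two masses `a` and `b`, i.e. `(a + b) h(a / (a + b))` with `h`
the binary entropy function, in nats. It is the correction to the concavity and to the
subadditivity of the entropy of unnormalised states. -/
def mixingEntropy (a b : ℝ) : ℝ := negMulLog a + negMulLog b - negMulLog (a + b)

lemma mixingEntropy_zero_left (b : ℝ) : mixingEntropy 0 b = 0 := by simp [mixingEntropy]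

lemma mixingEntropy_zero_right (a : ℝ) : mixingEntropy a 0 = 0 := by simp [mixingEntropy]

lemma mixingEntropy_le_tangent {a b s t : ℝ} (ha : 0 ≤ a) (hb : 0 ≤ b) (hs : 0 < s) (ht : 0 < t) :
    mixingEntropy a b ≤ a * (log (s + t) - log s) + b * (log (s + t) - log t) := by
  rcases (add_nonneg ha hb).eq_or_lt with h | h
  · obtain rfl : a = 0 := by linarith
    obtain rfl : b = 0 := by linarith
    simp [mixingEntropy]
  have hst : 0 < s + t := add_pos hs ht
  have ha' := negMulLog_le_tangent ha (div_pos (mul_pos h hs) hst)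
  have hb' := negMulLog_le_tangent hb (div_pos (mul_pos h ht) hst)
  rw [Real.log_div (by positivity) hst.ne', Real.log_mul h.ne' hs.ne'] at ha'
  rw [Real.log_div (by positivity) hst.ne', Real.log_mul h.ne' ht.ne'] at hb'
  have hsum : (a + b) * s / (s + t) + (a + b) * t / (s + t) = a + b := by field_simp
  have hlog : negMulLog (a + b) = -((a + b) * log (a + b)) := by rw [negMulLog, neg_mul]
  rw [mixingEntropy, hlog]
  linarith

lemma sum_mixingEntropy_le {ι : Type*} {s : Finset ι} {a b : ι → ℝ}
    (ha : ∀ i ∈ s, 0 ≤ a i) (hb : ∀ i ∈ s, 0 ≤ b i) :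
    ∑ i ∈ s, mixingEntropy (a i) (b i) ≤ mixingEntropy (∑ i ∈ s, a i) (∑ i ∈ s, b i) := by
  rcases (Finset.sum_nonneg ha).eq_or_lt with h | hsa
  · rw [← h, mixingEntropy_zero_left]
    refine (Finset.sum_eq_zero fun i hi => ?_).le
    rw [(Finset.sum_eq_zero_iff_of_nonneg ha).1 h.symm i hi, mixingEntropy_zero_left]
  rcases (Finset.sum_nonneg hb).eq_or_lt with h | hsb
  · rw [← h, mixingEntropy_zero_right]
    refine (Finset.sum_eq_zero fun i hi => ?_).le
    rw [(Finset.sum_eq_zero_iff_of_nonneg hb).1 h.symm i hi, mixingEntropy_zero_right]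
  refine (Finset.sum_le_sum fun i hi =>
    mixingEntropy_le_tangent (ha i hi) (hb i hi) hsa hsb).trans_eq ?_
  rw [Finset.sum_add_distrib, ← Finset.sum_mul, ← Finset.sum_mul]
  simp only [mixingEntropy, negMulLog]
  ring

lemma mixingEntropy_one_le {t : ℝ} (ht : 0 ≤ t) :
    mixingEntropy 1 t ≤ negMulLog t + (1 + t) * t := by
  have hlog := Real.log_le_sub_one_of_pos (show 0 < 1 + t by linarith)
  have := mul_le_mul_of_nonneg_left hlog (show 0 ≤ 1 + t by linarith)
  rw [mixingEntropy, Real.negMulLog_one]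
  simp only [negMulLog]
  linarith

lemma eta_nonneg {x : ℝ} (hx : 0 ≤ x) : 0 ≤ eta x := by
  rw [eta]
  split_ifs with h
  · exact neg_nonneg.2 (mul_nonpos_of_nonneg_of_nonpos hx
      (Real.logb_nonpos one_lt_two hx (by linarith)))
  · norm_num

lemma negMulLog_div_log_two_le_eta {t x : ℝ} (ht : 0 ≤ t) (htx : t ≤ x) (ht4 : t ≤ 1 / 4) :
    negMulLog t / log 2 ≤ eta x := by
  have hlog2 : 0 < log 2 := Real.log_pos one_lt_two
  have hexp : (1 / 4 : ℝ) ≤ Real.exp (-1) := by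
    rw [Real.exp_neg, one_div]
    gcongr
    linarith [Real.exp_one_lt_three]
  rw [div_le_iff₀ hlog2, eta]
  split_ifs with hx
  · have hmono := negMulLog_monotoneOn ⟨ht, ht4.trans hexp⟩ ⟨ht.trans htx, hx.trans hexp⟩ htx
    refine hmono.trans_eq ?_
    rw [negMulLog, logb]
    field_simp
  · have hmono := negMulLog_monotoneOn ⟨ht, ht4.trans hexp⟩ ⟨by norm_num, hexp⟩ ht4
    refine hmono.trans_eq ?_
    rw [negMulLog, show (1 / 4 : ℝ) = (2 ^ 2)⁻¹ by norm_num, Real.log_inv, Real.log_pow]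
    push_cast
    ring

lemma one_le_logb_two_natCast {d : ℕ} (h : logb 2 (d : ℝ) ≠ 0) : 1 ≤ logb 2 (d : ℝ) := by
  have hd : 2 ≤ d := by
    by_contra! hd
    interval_cases d <;> simp at h
  rw [Real.le_logb_iff_rpow_le one_lt_two (by positivity), Real.rpow_one]
  exact_mod_cast hd

lemma mul_add_mixingEntropy_one_le_eta {t ε ℓ : ℝ} (ht : 0 ≤ t) (htε : t ≤ ε / 2)
    (hε : ε ≤ 1 / 3) (hℓ : 1 ≤ ℓ) :
    t * ℓ + mixingEntropy 1 t / log 2 ≤ eta (2 * ε) + 3 * ε * ℓ := by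
  have hlog2 : 0 < log 2 := Real.log_pos one_lt_two
  have heta : negMulLog t / log 2 ≤ eta (2 * ε) :=
    negMulLog_div_log_two_le_eta ht (by linarith) (by linarith)
  have hquad : (1 + t) * t / log 2 ≤ ε := by
    rw [div_le_iff₀ hlog2]
    nlinarith [Real.log_two_gt_d9]
  have hmix : mixingEntropy 1 t / log 2 ≤ negMulLog t / log 2 + (1 + t) * t / log 2 := by
    rw [← add_div]
    gcongr
    exact mixingEntropy_one_le ht
  have htℓ : t * ℓ ≤ ε / 2 * ℓ := by gcongr
  have hεℓ : ε ≤ ε * ℓ := le_mul_of_one_le_right (by linarith) hℓ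
  linarith

end Scalar

section TraceFunction

lemma isHermitian_blockDiagonal {n m : Type*} [DecidableEq m] {M : m → Matrix n n ℂ}
    (hM : ∀ k, (M k).IsHermitian) : (blockDiagonal M).IsHermitian := by
  rw [Matrix.IsHermitian, blockDiagonal_conjTranspose]
  exact congrArg blockDiagonal (funext hM)

lemma diag_re_nonneg {n : Type*} {X : Matrix n n ℂ} (hX : X.PosSemidef) (i : n) :
    0 ≤ (X i i).re :=
  (Complex.le_def.1 hX.diag_nonneg).1

variable {n m : Type*} [Fintype n] [Fintype m]

/-- The trace function `X ↦ Tr f(X)` on Hermitian matrices, extended by `0`. It is encoded through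
the eigenvalues, exactly as `traceNorm` (the case of the absolute value) and `vonNeumannEntropy`
are. -/
def traceFn (f : ℝ → ℝ) (X : Matrix n n ℂ) : ℝ :=
  if h : X.IsHermitian then ∑ i, f (h.eigenvalues i) else 0

lemma traceFn_of_isHermitian (f : ℝ → ℝ) {X : Matrix n n ℂ} (hX : X.IsHermitian) :
    traceFn f X = ∑ i, f (hX.eigenvalues i) :=
  dif_pos hX

lemma trace_re_eq_sum_eigenvalues {X : Matrix n n ℂ} (hX : X.IsHermitian) :
    X.trace.re = ∑ i, hX.eigenvalues i := by
  simp [hX.trace_eq_sum_eigenvalues]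

lemma ofReal_trace_re {X : Matrix n n ℂ} (hX : X.IsHermitian) :
    (X.trace.re : ℂ) = X.trace := by
  simp [hX.trace_eq_sum_eigenvalues]

lemma trace_re_nonneg {X : Matrix n n ℂ} (hX : X.PosSemidef) : 0 ≤ X.trace.re :=
  (Complex.le_def.1 hX.trace_nonneg).1

lemma traceFn_eq_sum_roots_charpoly [DecidableEq n] (f : ℝ → ℝ) {X : Matrix n n ℂ}
    (hX : X.IsHermitian) : traceFn f X = (X.charpoly.roots.map fun z => f z.re).sum := by
  have hroots := hX.roots_charpoly_eq_eigenvalues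
  rw [traceFn_of_isHermitian f hX]
  convert_to _ = (Multiset.map (fun z : ℂ => f z.re) _).sum
  rw [hroots, Multiset.map_map]
  rfl

lemma traceFn_diagonal [DecidableEq n] (f : ℝ → ℝ) (d : n → ℝ) :
    traceFn f (diagonal fun i => (d i : ℂ)) = ∑ i, f (d i) := by
  have hd : (diagonal fun i => (d i : ℂ)).IsHermitian :=
    isHermitian_diagonal_of_self_adjoint _ (by ext; simp)
  rw [traceFn_eq_sum_roots_charpoly f hd, charpoly_diagonal, Polynomial.roots_prod _ _
    (Finset.prod_ne_zero_iff.2 fun i _ => Polynomial.X_sub_C_ne_zero _)]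
  simp

lemma charpoly_blockDiagonal {R : Type*} [CommRing R] [DecidableEq n] [DecidableEq m]
    (M : m → Matrix n n R) : (blockDiagonal M).charpoly = ∏ k, (M k).charpoly := by
  have hchar : (blockDiagonal M).charmatrix = blockDiagonal fun k => (M k).charmatrix := by
    ext ⟨i, k⟩ ⟨j, l⟩
    simp only [charmatrix_apply, blockDiagonal_apply, diagonal_apply, Prod.mk.injEq]
    split_ifs <;> simp_all
  simp only [Matrix.charpoly, hchar, det_blockDiagonal]

lemma traceFn_blockDiagonal [DecidableEq m] (f : ℝ → ℝ) {M : m → Matrix n n ℂ}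
    (hM : ∀ k, (M k).IsHermitian) : traceFn f (blockDiagonal M) = ∑ k, traceFn f (M k) := by
  rw [traceFn_eq_sum_roots_charpoly f (isHermitian_blockDiagonal hM), charpoly_blockDiagonal,
    Polynomial.roots_prod _ _
      (Finset.prod_ne_zero_iff.2 fun k _ => (charpoly_monic _).ne_zero)]
  simp only [Multiset.map_bind, Multiset.sum_bind, traceFn_eq_sum_roots_charpoly f (hM _)]
  rfl

/-- `V Vᴴ` and `Vᴴ V` have the same nonzero eigenvalues. -/
lemma traceFn_mul_conjTranspose_comm {f : ℝ → ℝ} (hf : f 0 = 0) (V : Matrix n m ℂ) :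
    traceFn f (V * Vᴴ) = traceFn f (Vᴴ * V) := by
  have hroots := congrArg Polynomial.roots (charpoly_mul_comm' V Vᴴ)
  rw [Polynomial.roots_mul ((Polynomial.monic_X_pow _).mul (charpoly_monic _)).ne_zero,
    Polynomial.roots_mul ((Polynomial.monic_X_pow _).mul (charpoly_monic _)).ne_zero,
    Polynomial.roots_X_pow, Polynomial.roots_X_pow] at hroots
  have hsum := congrArg (fun s => (s.map fun z : ℂ => f z.re).sum) hroots
  simpa [hf, Multiset.map_nsmul, Multiset.sum_nsmul,
    ← traceFn_eq_sum_roots_charpoly f (isHermitian_mul_conjTranspose_self V),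
    ← traceFn_eq_sum_roots_charpoly f (isHermitian_conjTranspose_mul_self V)] using hsum

lemma traceFn_unitary_conj (f : ℝ → ℝ) {X : Matrix n n ℂ} (hX : X.IsHermitian)
    (U : unitaryGroup n ℂ) :
    traceFn f ((U : Matrix n n ℂ)ᴴ * X * (U : Matrix n n ℂ)) = traceFn f X := by
  rw [traceFn_eq_sum_roots_charpoly f hX,
    traceFn_eq_sum_roots_charpoly f (isHermitian_conjTranspose_mul_mul _ hX), charpoly_mul_comm,
    ← Matrix.mul_assoc, ← star_eq_conjTranspose, mem_unitaryGroup_iff.1 U.2, Matrix.one_mul]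

lemma trace_unitary_conj (X : Matrix n n ℂ) (U : unitaryGroup n ℂ) :
    ((U : Matrix n n ℂ)ᴴ * X * (U : Matrix n n ℂ)).trace = X.trace := by
  rw [trace_mul_comm, ← Matrix.mul_assoc, ← star_eq_conjTranspose, mem_unitaryGroup_iff.1 U.2,
    Matrix.one_mul]

lemma sum_norm_sq_unitary_row (U : unitaryGroup n ℂ) (i : n) :
    ∑ j, ‖(U : Matrix n n ℂ) i j‖ ^ 2 = 1 := by
  have hrow := congrFun₂ (mem_unitaryGroup_iff.1 U.2) i i
  rw [Matrix.mul_apply, one_apply_eq] at hrow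
  simp only [star_apply, Complex.star_def, Complex.mul_conj'] at hrow
  exact_mod_cast hrow

lemma sum_norm_sq_unitary_col (U : unitaryGroup n ℂ) (j : n) :
    ∑ i, ‖(U : Matrix n n ℂ) i j‖ ^ 2 = 1 := by
  simpa [star_apply] using sum_norm_sq_unitary_row (star U) j

lemma eq_eigenvectorUnitary_mul_diagonal_mul {X : Matrix n n ℂ} (hX : X.IsHermitian) :
    X = (hX.eigenvectorUnitary : Matrix n n ℂ) * diagonal (fun i => (hX.eigenvalues i : ℂ)) *
      (hX.eigenvectorUnitary : Matrix n n ℂ)ᴴ := by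
  conv_lhs => rw [hX.spectral_theorem, Unitary.conjStarAlgAut_apply]
  rfl

lemma diag_re_eq_sum_eigenvalues {X : Matrix n n ℂ} (hX : X.IsHermitian) (j : n) :
    (X j j).re = ∑ i, ‖(hX.eigenvectorUnitary : Matrix n n ℂ) j i‖ ^ 2 * hX.eigenvalues i := by
  have hentry := congrFun₂ (eq_eigenvectorUnitary_mul_diagonal_mul hX) j j
  rw [hentry, Matrix.mul_apply, Complex.re_sum]
  refine Finset.sum_congr rfl fun i _ => ?_
  rw [mul_diagonal, conjTranspose_apply, Complex.star_def, mul_right_comm, Complex.mul_conj']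
  norm_cast

/-- Peierls' inequality: by the spectral theorem each diagonal entry of `X` is an average of its
eigenvalues, with weights that form a doubly stochastic matrix. -/
lemma traceFn_le_sum_diag {f : ℝ → ℝ} {s : Set ℝ} (hf : ConcaveOn ℝ s f) {X : Matrix n n ℂ}
    (hX : X.IsHermitian) (hs : ∀ i, hX.eigenvalues i ∈ s) :
    traceFn f X ≤ ∑ j, f (X j j).re := by
  set U := hX.eigenvectorUnitary
  calc traceFn f X = ∑ i, f (hX.eigenvalues i) := traceFn_of_isHermitian f hX
    _ = ∑ i, ∑ j, ‖(U : Matrix n n ℂ) j i‖ ^ 2 * f (hX.eigenvalues i) := by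
      simp only [← Finset.sum_mul, sum_norm_sq_unitary_col, one_mul]
    _ = ∑ j, ∑ i, ‖(U : Matrix n n ℂ) j i‖ ^ 2 * f (hX.eigenvalues i) := Finset.sum_comm
    _ ≤ ∑ j, f (X j j).re := by
      refine Finset.sum_le_sum fun j _ => ?_
      rw [diag_re_eq_sum_eigenvalues hX j]
      exact hf.le_map_sum (fun i _ => by positivity) (sum_norm_sq_unitary_row U j)
        fun i _ => hs i

lemma exists_factor_of_posSemidef {X : Matrix n n ℂ} (hX : X.PosSemidef) :
    ∃ V : Matrix n n ℂ, V * Vᴴ = X ∧ Vᴴ * V = diagonal fun i => (hX.1.eigenvalues i : ℂ) := by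
  set U := (hX.1.eigenvectorUnitary : Matrix n n ℂ)
  set R : Matrix n n ℂ := diagonal fun i => (√(hX.1.eigenvalues i) : ℂ) with hR
  have hRR : R * R = diagonal fun i => (hX.1.eigenvalues i : ℂ) := by
    rw [hR, diagonal_mul_diagonal]
    congr 1 with i
    exact_mod_cast Real.mul_self_sqrt (hX.eigenvalues_nonneg i)
  have hRH : Rᴴ = R := by
    rw [hR, diagonal_conjTranspose]
    congr 1 with i
    simp
  have hUU : Uᴴ * U = 1 := mem_unitaryGroup_iff'.1 hX.1.eigenvectorUnitary.2
  refine ⟨U * R, ?_, ?_⟩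
  · rw [conjTranspose_mul, hRH, Matrix.mul_assoc, ← Matrix.mul_assoc R, hRR, ← Matrix.mul_assoc]
    exact (eq_eigenvectorUnitary_mul_diagonal_mul hX.1).symm
  · rw [conjTranspose_mul, hRH, Matrix.mul_assoc, ← Matrix.mul_assoc Uᴴ, hUU, Matrix.one_mul, hRR]

/-- The Rotfeld inequality. If `X = V Vᴴ` and `Y = W Wᴴ`, then `X + Y` has the same nonzero
eigenvalues as the Gram matrix of the columns of `V` and `W`, whose diagonal consists of
the eigenvalues of `X` and `Y` when these columns are scaled eigenvectors. -/
lemma traceFn_add_le {f : ℝ → ℝ} (hf : ConcaveOn ℝ (Set.Ici 0) f) (hf0 : f 0 = 0)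
    {X Y : Matrix n n ℂ} (hX : X.PosSemidef) (hY : Y.PosSemidef) :
    traceFn f (X + Y) ≤ traceFn f X + traceFn f Y := by
  obtain ⟨V, hV, hV'⟩ := exists_factor_of_posSemidef hX
  obtain ⟨W, hW, hW'⟩ := exists_factor_of_posSemidef hY
  have hsum : fromCols V W * (fromCols V W)ᴴ = X + Y := by
    rw [conjTranspose_fromCols_eq_fromRows_conjTranspose, fromCols_mul_fromRows, hV, hW]
  have hgram : (fromCols V W)ᴴ * fromCols V W = fromBlocks (Vᴴ * V) (Vᴴ * W) (Wᴴ * V) (Wᴴ * W) := by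
    rw [conjTranspose_fromCols_eq_fromRows_conjTranspose, fromRows_mul_fromCols]
  have hpsd := posSemidef_conjTranspose_mul_self (fromCols V W)
  calc traceFn f (X + Y) = traceFn f ((fromCols V W)ᴴ * fromCols V W) := by
        rw [← hsum, traceFn_mul_conjTranspose_comm hf0]
    _ ≤ ∑ j, f (((fromCols V W)ᴴ * fromCols V W) j j).re :=
      traceFn_le_sum_diag hf hpsd.1 hpsd.eigenvalues_nonneg
    _ = traceFn f X + traceFn f Y := by
      rw [hgram, hV', hW', Fintype.sum_sum_type, traceFn_of_isHermitian f hX.1,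
        traceFn_of_isHermitian f hY.1]
      simp

lemma posSemidef_unitary_mul_diagonal_mul (U : unitaryGroup n ℂ) {d : n → ℝ} (hd : ∀ i, 0 ≤ d i) :
    ((U : Matrix n n ℂ) * diagonal (fun i => (d i : ℂ)) * (U : Matrix n n ℂ)ᴴ).PosSemidef :=
  (PosSemidef.diagonal fun i => by simpa using hd i).mul_mul_conjTranspose_same _

lemma trace_unitary_mul_diagonal_mul (U : unitaryGroup n ℂ) (d : n → ℝ) :
    ((U : Matrix n n ℂ) * diagonal (fun i => (d i : ℂ)) * (U : Matrix n n ℂ)ᴴ).trace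
      = ∑ i, (d i : ℂ) := by
  simpa [← star_eq_conjTranspose] using
    trace_unitary_conj (diagonal fun i => (d i : ℂ)) (star U)

lemma exists_posSemidef_sub_eq {X : Matrix n n ℂ} (hX : X.IsHermitian) :
    ∃ P N : Matrix n n ℂ, P.PosSemidef ∧ N.PosSemidef ∧ P - N = X ∧
      P.trace.re + N.trace.re = traceNorm X := by
  set U := hX.eigenvectorUnitary
  refine ⟨_, _, posSemidef_unitary_mul_diagonal_mul U fun i => posPart_nonneg (hX.eigenvalues i),
    posSemidef_unitary_mul_diagonal_mul U fun i => negPart_nonneg (hX.eigenvalues i), ?_, ?_⟩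
  · conv_rhs => rw [eq_eigenvectorUnitary_mul_diagonal_mul hX]
    rw [← Matrix.sub_mul, ← Matrix.mul_sub, diagonal_sub]
    simp only [← Complex.ofReal_sub, posPart_sub_negPart]
    rfl
  · rw [trace_unitary_mul_diagonal_mul, trace_unitary_mul_diagonal_mul, ← Complex.ofReal_sum,
      ← Complex.ofReal_sum, Complex.ofReal_re, Complex.ofReal_re, ← Finset.sum_add_distrib,
      traceNorm, dif_pos hX]
    simp only [posPart_add_negPart]

end TraceFunction

section HomogeneousEntropy

variable {n : Type*} [Fintype n]

/-- In an eigenbasis of `X + Y` the diagonals of `X` and `Y` sum to the eigenvalues of `X + Y`. -/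
lemma traceFn_negMulLog_add_traceFn_negMulLog_le {X Y : Matrix n n ℂ}
    (hX : X.PosSemidef) (hY : Y.PosSemidef) :
    traceFn negMulLog X + traceFn negMulLog Y
      ≤ traceFn negMulLog (X + Y) + mixingEntropy X.trace.re Y.trace.re := by
  have hXY := hX.1.add hY.1
  set U := hXY.eigenvectorUnitary
  set X' := (U : Matrix n n ℂ)ᴴ * X * (U : Matrix n n ℂ) with hX'
  set Y' := (U : Matrix n n ℂ)ᴴ * Y * (U : Matrix n n ℂ) with hY'
  have hX'pos : X'.PosSemidef := hX.conjTranspose_mul_mul_same _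
  have hY'pos : Y'.PosSemidef := hY.conjTranspose_mul_mul_same _
  have hdiagonal := hXY.conjStarAlgAut_star_eigenvectorUnitary
  rw [Unitary.conjStarAlgAut_star_apply, star_eq_conjTranspose] at hdiagonal
  have hdiag (j : n) : (X' j j).re + (Y' j j).re = hXY.eigenvalues j := by
    rw [← Complex.add_re, ← Matrix.add_apply, hX', hY', ← Matrix.add_mul, ← Matrix.mul_add,
      hdiagonal]
    simp
  have htrace {Z : Matrix n n ℂ} : ∑ j, (Z j j).re = Z.trace.re := by
    simp [Matrix.trace]
  calc traceFn negMulLog X + traceFn negMulLog Y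
      = traceFn negMulLog X' + traceFn negMulLog Y' := by
        rw [traceFn_unitary_conj _ hX.1, traceFn_unitary_conj _ hY.1]
    _ ≤ ∑ j, negMulLog (X' j j).re + ∑ j, negMulLog (Y' j j).re :=
        add_le_add
          (traceFn_le_sum_diag Real.concaveOn_negMulLog hX'pos.1 hX'pos.eigenvalues_nonneg)
          (traceFn_le_sum_diag Real.concaveOn_negMulLog hY'pos.1 hY'pos.eigenvalues_nonneg)
    _ = traceFn negMulLog (X + Y) + ∑ j, mixingEntropy (X' j j).re (Y' j j).re := by
        simp only [mixingEntropy, hdiag, traceFn_of_isHermitian _ hXY, Finset.sum_add_distrib,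
          Finset.sum_sub_distrib]
        ring
    _ ≤ traceFn negMulLog (X + Y) + mixingEntropy X.trace.re Y.trace.re := by
        gcongr
        refine (sum_mixingEntropy_le (fun j _ => diag_re_nonneg hX'pos j)
          fun j _ => diag_re_nonneg hY'pos j).trans_eq ?_
        rw [htrace, htrace, trace_unitary_conj, trace_unitary_conj]

/-- The entropy, in nats, of an unnormalised state, extended homogeneously: it equals
`Tr X * S(X / Tr X)`. Blocks of a state classical on `B` are such unnormalised states, and no
division by the possibly zero trace is needed. -/
def homEntropy (X : Matrix n n ℂ) : ℝ := traceFn negMulLog X - negMulLog X.trace.re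

lemma homEntropy_nonneg {X : Matrix n n ℂ} (hX : X.PosSemidef) : 0 ≤ homEntropy X := by
  rw [homEntropy, traceFn_of_isHermitian _ hX.1, trace_re_eq_sum_eigenvalues hX.1, sub_nonneg]
  exact negMulLog_sum_le fun i _ => hX.eigenvalues_nonneg i

lemma homEntropy_le {X : Matrix n n ℂ} (hX : X.PosSemidef) :
    homEntropy X ≤ X.trace.re * log (Fintype.card n) := by
  rw [homEntropy, traceFn_of_isHermitian _ hX.1, trace_re_eq_sum_eigenvalues hX.1,
    sub_le_iff_le_add']
  exact sum_negMulLog_le fun i _ => hX.eigenvalues_nonneg i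

lemma homEntropy_add_homEntropy_le {X Y : Matrix n n ℂ} (hX : X.PosSemidef) (hY : Y.PosSemidef) :
    homEntropy X + homEntropy Y ≤ homEntropy (X + Y) := by
  have h := traceFn_negMulLog_add_traceFn_negMulLog_le hX hY
  rw [mixingEntropy] at h
  simp only [homEntropy, trace_add, Complex.add_re]
  linarith

lemma homEntropy_add_le {X Y : Matrix n n ℂ} (hX : X.PosSemidef) (hY : Y.PosSemidef) :
    homEntropy (X + Y)
      ≤ homEntropy X + homEntropy Y + mixingEntropy X.trace.re Y.trace.re := by
  have h := traceFn_add_le Real.concaveOn_negMulLog Real.negMulLog_zero hX hY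
  simp only [homEntropy, trace_add, Complex.add_re, mixingEntropy]
  linarith

lemma homEntropy_sub_le {X Y P N : Matrix n n ℂ} (hX : X.PosSemidef) (hY : Y.PosSemidef)
    (hP : P.PosSemidef) (hN : N.PosSemidef) (h : X + N = Y + P) :
    homEntropy X - homEntropy Y
      ≤ P.trace.re * log (Fintype.card n) + mixingEntropy Y.trace.re P.trace.re := by
  have hconcave := homEntropy_add_homEntropy_le hX hN
  have hsubadd := homEntropy_add_le hY hP
  rw [h] at hconcave
  linarith [homEntropy_nonneg hN, homEntropy_le hP]

end HomogeneousEntropy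

section ClassicalOnB

lemma classicalOnB_eq_blockDiagonal {n m : Type*} [DecidableEq m] (p : m → ℝ)
    (ρs : m → Matrix n n ℂ) : classicalOnB p ρs = blockDiagonal fun k => (p k : ℂ) • ρs k := by
  ext ⟨i, k⟩ ⟨j, l⟩
  simp [classicalOnB, blockDiagonal_apply]

variable {n m : Type*} [Fintype n] [Fintype m] [DecidableEq m]

lemma vonNeumannEntropy_eq_traceFn_div (X : Matrix n n ℂ) :
    vonNeumannEntropy X = traceFn negMulLog X / log 2 := by
  rw [vonNeumannEntropy, traceFn]
  split_ifs
  · rw [Finset.sum_div]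
    exact Finset.sum_congr rfl fun i _ => by rw [negMulLog, logb]; ring
  · simp

lemma ptraceL_blockDiagonal (M : m → Matrix n n ℂ) :
    ptraceL (blockDiagonal M) = diagonal fun k => (M k).trace := by
  ext k l
  rcases eq_or_ne k l with rfl | h
  · simp [ptraceL, Matrix.trace]
  · simp [ptraceL, blockDiagonal_apply_ne, h]

lemma condEntropyA_blockDiagonal {M : m → Matrix n n ℂ} (hM : ∀ k, (M k).IsHermitian) :
    condEntropyA (blockDiagonal M) = (∑ k, homEntropy (M k)) / log 2 := by
  have htrace : ptraceL (blockDiagonal M) = diagonal fun k => ((M k).trace.re : ℂ) := by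
    simp only [ptraceL_blockDiagonal, ofReal_trace_re (hM _)]
  rw [condEntropyA, vonNeumannEntropy_eq_traceFn_div, vonNeumannEntropy_eq_traceFn_div,
    traceFn_blockDiagonal _ hM, htrace, traceFn_diagonal, ← sub_div, ← Finset.sum_sub_distrib]
  rfl

lemma traceNorm_blockDiagonal {M : m → Matrix n n ℂ} (hM : ∀ k, (M k).IsHermitian) :
    traceNorm (blockDiagonal M) = ∑ k, traceNorm (M k) :=
  traceFn_blockDiagonal abs hM

lemma traceNorm_nonneg (X : Matrix n n ℂ) : 0 ≤ traceNorm X := by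
  rw [traceNorm]
  split_ifs
  · exact Finset.sum_nonneg fun i _ => abs_nonneg _
  · exact le_rfl

lemma condEntropyA_blockDiagonal_mem_Icc {X : m → Matrix n n ℂ} (hX : ∀ k, (X k).PosSemidef) :
    condEntropyA (blockDiagonal X)
      ∈ Set.Icc 0 ((∑ k, (X k).trace.re) * logb 2 (Fintype.card n)) := by
  have hlog2 : 0 < log 2 := Real.log_pos one_lt_two
  rw [condEntropyA_blockDiagonal fun k => (hX k).1]
  refine ⟨div_nonneg (Finset.sum_nonneg fun k _ => homEntropy_nonneg (hX k)) hlog2.le, ?_⟩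
  rw [logb, ← mul_div_assoc, Finset.sum_mul]
  gcongr with k
  exact homEntropy_le (hX k)

lemma condEntropyA_blockDiagonal_sub_le {X Y P N : m → Matrix n n ℂ}
    (hX : ∀ k, (X k).PosSemidef) (hY : ∀ k, (Y k).PosSemidef)
    (hP : ∀ k, (P k).PosSemidef) (hN : ∀ k, (N k).PosSemidef) (h : ∀ k, X k + N k = Y k + P k) :
    condEntropyA (blockDiagonal X) - condEntropyA (blockDiagonal Y)
      ≤ (∑ k, (P k).trace.re) * logb 2 (Fintype.card n)
        + mixingEntropy (∑ k, (Y k).trace.re) (∑ k, (P k).trace.re) / log 2 := by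
  rw [condEntropyA_blockDiagonal fun k => (hX k).1, condEntropyA_blockDiagonal fun k => (hY k).1,
    ← sub_div, logb, ← mul_div_assoc, ← add_div, ← Finset.sum_sub_distrib]
  gcongr
  calc ∑ k, (homEntropy (X k) - homEntropy (Y k))
      ≤ ∑ k, ((P k).trace.re * log (Fintype.card n)
          + mixingEntropy (Y k).trace.re (P k).trace.re) :=
        Finset.sum_le_sum fun k _ => homEntropy_sub_le (hX k) (hY k) (hP k) (hN k) (h k)
    _ ≤ _ := by
        rw [Finset.sum_add_distrib, ← Finset.sum_mul]
        gcongr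
        exact sum_mixingEntropy_le (fun k _ => trace_re_nonneg (hY k))
          fun k _ => trace_re_nonneg (hP k)

/-- The Jordan decompositions `X k - Y k = P k - N k` of the blocks satisfy `Tr P = Tr N` in
total, so the bound above can be applied in both directions. -/
lemma abs_condEntropyA_blockDiagonal_sub_le {X Y : m → Matrix n n ℂ}
    (hX : ∀ k, (X k).PosSemidef) (hY : ∀ k, (Y k).PosSemidef)
    (htr : ∑ k, (X k).trace.re = ∑ k, (Y k).trace.re) :
    |condEntropyA (blockDiagonal X) - condEntropyA (blockDiagonal Y)|
      ≤ traceNorm (blockDiagonal X - blockDiagonal Y) / 2 * logb 2 (Fintype.card n)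
        + mixingEntropy (∑ k, (X k).trace.re)
            (traceNorm (blockDiagonal X - blockDiagonal Y) / 2) / log 2 := by
  have hXY (k : m) : (X k - Y k).IsHermitian := (hX k).1.sub (hY k).1
  choose P N hP hN hPN hnorm using fun k => exists_posSemidef_sub_eq (hXY k)
  have hnorm_sum : ∑ k, (P k).trace.re + ∑ k, (N k).trace.re
      = traceNorm (blockDiagonal X - blockDiagonal Y) := by
    rw [← blockDiagonal_sub, traceNorm_blockDiagonal (M := X - Y) hXY, ← Finset.sum_add_distrib]
    exact Finset.sum_congr rfl fun k _ => hnorm k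
  have htrPN : ∑ k, (P k).trace.re = ∑ k, (N k).trace.re := by
    rw [← sub_eq_zero, ← Finset.sum_sub_distrib]
    simp only [← Complex.sub_re, ← trace_sub, hPN]
    simp only [trace_sub, Complex.sub_re, Finset.sum_sub_distrib, htr, sub_self]
  have hPT : ∑ k, (P k).trace.re = traceNorm (blockDiagonal X - blockDiagonal Y) / 2 := by linarith
  have hNT : ∑ k, (N k).trace.re = traceNorm (blockDiagonal X - blockDiagonal Y) / 2 := by linarith
  have hsum (k : m) : X k + N k = Y k + P k := by
    rw [add_comm (Y k), ← sub_eq_sub_iff_add_eq_add, hPN]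
  rw [abs_sub_le_iff]
  constructor
  · simpa only [hPT, htr] using condEntropyA_blockDiagonal_sub_le hX hY hP hN hsum
  · simpa only [hNT] using condEntropyA_blockDiagonal_sub_le hY hX hN hP fun k => (hsum k).symm

lemma posSemidef_smul_state {ρ : Matrix n n ℂ} (hρ : IsState ρ) {c : ℝ} (hc : 0 ≤ c) :
    ((c : ℂ) • ρ).PosSemidef :=
  hρ.1.smul (by exact_mod_cast hc)

lemma trace_smul_state {ρ : Matrix n n ℂ} (hρ : IsState ρ) (c : ℝ) :
    ((c : ℂ) • ρ).trace.re = c := by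
  simp [hρ.2]

variable {p q : m → ℝ} {ρs σs : m → Matrix n n ℂ}

lemma condEntropyA_classicalOnB_mem_Icc (hp : ∀ k, 0 ≤ p k) (hp1 : ∑ k, p k = 1)
    (hρs : ∀ k, IsState (ρs k)) :
    condEntropyA (classicalOnB p ρs) ∈ Set.Icc 0 (logb 2 (Fintype.card n)) := by
  have h := condEntropyA_blockDiagonal_mem_Icc fun k => posSemidef_smul_state (hρs k) (hp k)
  simpa only [classicalOnB_eq_blockDiagonal, trace_smul_state (hρs _), hp1, one_mul] using h

lemma abs_condEntropyA_classicalOnB_sub_le (hp : ∀ k, 0 ≤ p k) (hp1 : ∑ k, p k = 1)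
    (hq : ∀ k, 0 ≤ q k) (hq1 : ∑ k, q k = 1)
    (hρs : ∀ k, IsState (ρs k)) (hσs : ∀ k, IsState (σs k)) :
    |condEntropyA (classicalOnB p ρs) - condEntropyA (classicalOnB q σs)|
      ≤ traceNorm (classicalOnB p ρs - classicalOnB q σs) / 2 * logb 2 (Fintype.card n)
        + mixingEntropy 1 (traceNorm (classicalOnB p ρs - classicalOnB q σs) / 2) / log 2 := by
  have h := abs_condEntropyA_blockDiagonal_sub_le
    (fun k => posSemidef_smul_state (hρs k) (hp k))
    (fun k => posSemidef_smul_state (hσs k) (hq k))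
    (by simp only [trace_smul_state (hρs _), trace_smul_state (hσs _), hp1, hq1])
  simpa only [classicalOnB_eq_blockDiagonal, trace_smul_state (hρs _), hp1] using h

end ClassicalOnB

/-- Fannes-type inequality for the conditional entropy of states classical
on `B`: if `‖ρ^{AB} - σ^{AB}‖₁ ≤ ε` then
`|S(A|B)_ρ - S(A|B)_σ| ≤ η(2ε) + 3 ε log₂ d_A`. -/
theorem condEntropy_fannes_classicalOnB
    {A B : Type*} [Fintype A] [Fintype B] [DecidableEq B]
    (p q : B → ℝ) (ρs σs : B → Matrix A A ℂ)
    (hp : ∀ k, 0 ≤ p k) (hp1 : (∑ k, p k) = 1)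
    (hq : ∀ k, 0 ≤ q k) (hq1 : (∑ k, q k) = 1)
    (hρs : ∀ k, IsState (ρs k)) (hσs : ∀ k, IsState (σs k))
    (ε : ℝ) (hε : traceNorm (classicalOnB p ρs - classicalOnB q σs) ≤ ε) :
    |condEntropyA (classicalOnB p ρs) - condEntropyA (classicalOnB q σs)|
      ≤ eta (2 * ε) + 3 * ε * Real.logb 2 (Fintype.card A) := by
  have hρ := condEntropyA_classicalOnB_mem_Icc hp hp1 hρs
  have hσ := condEntropyA_classicalOnB_mem_Icc hq hq1 hσs
  have hsharp := abs_condEntropyA_classicalOnB_sub_le hp hp1 hq hq1 hρs hσs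
  have hnorm := traceNorm_nonneg (classicalOnB p ρs - classicalOnB q σs)
  set ℓ := logb 2 (Fintype.card A)
  by_cases htriv : ℓ ≤ 3 * ε * ℓ
  · have htrivial := abs_sub_le_of_nonneg_of_le hρ.1 hρ.2 hσ.1 hσ.2
    linarith [eta_nonneg (show 0 ≤ 2 * ε by linarith)]
  have hℓ0 : ℓ ≠ 0 := fun h => htriv (by simp [h])
  have hε3 : ε ≤ 1 / 3 := by nlinarith [hρ.1.trans hρ.2]
  exact hsharp.trans <| mul_add_mixingEntropy_one_le_eta (by linarith) (by linarith) hε3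
    (one_le_logb_two_natCast hℓ0)

end
end

section
/- Fannes-type inequality for classical conditional entropy: let P and Q be probability distributions on a finite product set X × Y with ∑_{x,y} |P(x,y) - Q(x,y)| ≤ ε. Then |H(X|Y)_P - H(X|Y)_Q| ≤ η(2ε) + 3ε log₂ |X|, where H(X|Y) = H(XY) - H(Y) is the conditional Shannon entropy and η(t) = -t log₂ t for t ≤ 1/4 and η(t) = 1/2 otherwise. -/
open Matrix BigOperators Kronecker
open scoped Classical ComplexOrder

noncomputable section

variable {A B E : Type*} [Fintype A] [Fintype B] [Fintype E]

/-- Shannon entropy (base 2) of a probability distribution on a finite set,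
with the convention `0 log₂ 0 = 0`. -/
def shannonEntropy {S : Type*} [Fintype S] (P : S → ℝ) : ℝ :=
  ∑ s, -(P s * Real.logb 2 (P s))

/-!
Let `H` be the conditional entropy `H(X|Y)` in nats, extended homogeneously to nonnegative functions
on `X × Y`. Concavity and homogeneity give `H m ≤ H (m + r) ≤ H m + H r + h`, where `h` is the
homogeneous entropy of the pair of total masses of `m` and `r`: it pays for the flag telling which
summand was drawn. Given probability distributions `P` and `Q` at total variation distance `δ`,
take the common part `m = P ⊓ Q` and the excess `r = (P - Q)⁺`, which has mass `δ`. Then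
`H P ≤ H m + δ log |X| + binEntropy δ`, while `H m ≤ H Q` because `m ≤ Q`. Finally
`binEntropy δ ≤ η(δ) log 2 + 2 δ log |X|` for `|X| ≥ 2`, and `η` is nondecreasing on
`[0, ∞)` with `δ ≤ ε / 2`.
-/

lemma sum_mul_map_div_le {ι : Type*} {s : Finset ι} {S : Set ℝ} {f : ℝ → ℝ}
    (hf : ConcaveOn ℝ S f) {a b : ι → ℝ} (hb : ∀ i ∈ s, 0 ≤ b i)
    (hab : ∀ i ∈ s, b i = 0 → a i = 0) (hS : ∀ i ∈ s, a i / b i ∈ S) :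
    ∑ i ∈ s, b i * f (a i / b i) ≤ (∑ i ∈ s, b i) * f ((∑ i ∈ s, a i) / ∑ i ∈ s, b i) := by
  rcases (Finset.sum_nonneg hb).eq_or_lt with hB | hB
  · have b_eq_zero : ∀ i ∈ s, b i = 0 := (Finset.sum_eq_zero_iff_of_nonneg hb).1 hB.symm
    rw [← hB, zero_mul, Finset.sum_eq_zero fun i hi => by rw [b_eq_zero i hi, zero_mul]]
  · have sum_mul_div : ∑ i ∈ s, b i * (a i / b i) = ∑ i ∈ s, a i :=
      Finset.sum_congr rfl fun i hi => mul_div_cancel_of_imp' (hab i hi)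
    have jensen := hf.le_map_centerMass hb hB hS
    simp only [Finset.centerMass, smul_eq_mul, Function.comp_apply, sum_mul_div] at jensen
    rwa [inv_mul_le_iff₀ hB, inv_mul_eq_div] at jensen

section MassEntropy

variable {X : Type*} [Fintype X]

/-- The total mass of `v` times the Shannon entropy, in nats, of `v` normalised to total mass one:
the extension of Shannon entropy to nonnegative functions that is homogeneous of degree one. The
formula chosen here needs no division, so that it also covers `v = 0`. -/
def massEntropy (v : X → ℝ) : ℝ :=
  ∑ x, Real.negMulLog (v x) - Real.negMulLog (∑ x, v x)

lemma massEntropy_pair (a b : ℝ) :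
    massEntropy ![a, b] = Real.negMulLog a + Real.negMulLog b - Real.negMulLog (a + b) := by
  simp [massEntropy]

lemma massEntropy_pair_one_sub (p : ℝ) : massEntropy ![1 - p, p] = Real.binEntropy p := by
  rw [massEntropy_pair, Real.binEntropy_eq_negMulLog_add_negMulLog_one_sub, sub_add_cancel,
    Real.negMulLog_one, sub_zero, add_comm]

lemma eq_zero_of_sum_eq_zero {v : X → ℝ} (hv : 0 ≤ v) (h : ∑ x, v x = 0) (x : X) : v x = 0 :=
  congrFun ((Fintype.sum_eq_zero_iff_of_nonneg hv).1 h) x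

lemma massEntropy_eq_sum_mul_negMulLog_div {v : X → ℝ} (hv : 0 ≤ v) :
    massEntropy v = ∑ x, (∑ x, v x) * Real.negMulLog (v x / ∑ x, v x) := by
  rcases eq_or_ne (∑ x, v x) 0 with hV | hV
  · simp [massEntropy, eq_zero_of_sum_eq_zero hv hV]
  · have negMulLog_eq (x : X) : Real.negMulLog (v x) =
        v x / (∑ x, v x) * Real.negMulLog (∑ x, v x) +
          (∑ x, v x) * Real.negMulLog (v x / ∑ x, v x) := by
      rw [← Real.negMulLog_mul, mul_div_cancel₀ _ hV]
    rw [massEntropy, Finset.sum_congr rfl fun x _ => negMulLog_eq x, Finset.sum_add_distrib,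
      ← Finset.sum_mul, ← Finset.sum_div, div_self hV, one_mul, add_sub_cancel_left]

lemma massEntropy_nonneg {v : X → ℝ} (hv : 0 ≤ v) : 0 ≤ massEntropy v := by
  rw [massEntropy_eq_sum_mul_negMulLog_div hv]
  have hV : 0 ≤ ∑ x, v x := Fintype.sum_nonneg hv
  have le_sum (x : X) : v x ≤ ∑ x, v x :=
    Finset.single_le_sum (fun i _ => hv i) (Finset.mem_univ x)
  exact Finset.sum_nonneg fun x _ => mul_nonneg hV <|
    Real.negMulLog_nonneg (div_nonneg (hv x) hV) (div_le_one_of_le₀ (le_sum x) hV)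

lemma sum_massEntropy_le {ι : Type*} [Fintype ι] {v : ι → X → ℝ} (hv : 0 ≤ v) :
    ∑ i, massEntropy (v i) ≤ massEntropy (∑ i, v i) := by
  have sum_comm : ∑ x, ∑ i, v i x = ∑ i, ∑ x, v i x := Finset.sum_comm
  simp only [massEntropy_eq_sum_mul_negMulLog_div (Fintype.sum_nonneg hv),
    massEntropy_eq_sum_mul_negMulLog_div (hv _), Finset.sum_apply, sum_comm]
  rw [Finset.sum_comm]
  exact Finset.sum_le_sum fun x _ => sum_mul_map_div_le Real.concaveOn_negMulLog
    (fun i _ => Fintype.sum_nonneg (hv i)) (fun i _ h => eq_zero_of_sum_eq_zero (hv i) h x)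
    (fun i _ => div_nonneg (hv i x) (Fintype.sum_nonneg (hv i)))

lemma massEntropy_le_sum_mul_log_card {v : X → ℝ} (hv : 0 ≤ v) :
    massEntropy v ≤ (∑ x, v x) * Real.log (Fintype.card X) := by
  rcases isEmpty_or_nonempty X with hX | hX
  · simp [massEntropy]
  have hn : (Fintype.card X : ℝ) ≠ 0 := Nat.cast_ne_zero.2 Fintype.card_ne_zero
  have jensen := sum_mul_map_div_le (s := Finset.univ) (a := v) (b := 1)
    Real.concaveOn_negMulLog (by simp) (by simp) (by simpa using fun x => hv x)
  simp only [Pi.one_apply, one_mul, div_one, Finset.sum_const, Finset.card_univ, nsmul_eq_mul,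
    mul_one] at jensen
  have rescale : Real.negMulLog (∑ x, v x) =
      Fintype.card X * Real.negMulLog ((∑ x, v x) / Fintype.card X) -
        (∑ x, v x) * Real.log (Fintype.card X) := by
    conv_lhs => rw [← div_mul_cancel₀ (∑ x, v x) hn, Real.negMulLog_mul]
    rw [Real.negMulLog.eq_def (Fintype.card X : ℝ)]
    field_simp
    ring
  rw [massEntropy, rescale]
  linarith

lemma massEntropy_le_massEntropy_add {m r : X → ℝ} (hm : 0 ≤ m) (hr : 0 ≤ r) :
    massEntropy m ≤ massEntropy (m + r) := by
  have superadd : massEntropy m + massEntropy r ≤ massEntropy (m + r) := by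
    simpa using sum_massEntropy_le (v := ![m, r]) (Fin.forall_fin_two.2 ⟨hm, hr⟩)
  linarith [massEntropy_nonneg hr]

lemma negMulLog_add_le {a b : ℝ} (ha : 0 ≤ a) (hb : 0 ≤ b) :
    Real.negMulLog (a + b) ≤ Real.negMulLog a + Real.negMulLog b := by
  have := massEntropy_nonneg (v := ![a, b]) (Fin.forall_fin_two.2 ⟨ha, hb⟩)
  rwa [massEntropy_pair, sub_nonneg] at this

lemma massEntropy_add_le {m r : X → ℝ} (hm : 0 ≤ m) (hr : 0 ≤ r) :
    massEntropy (m + r) ≤ massEntropy m + massEntropy r + massEntropy ![∑ x, m x, ∑ x, r x] := by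
  have pointwise : ∑ x, Real.negMulLog (m x + r x) ≤
      ∑ x, Real.negMulLog (m x) + ∑ x, Real.negMulLog (r x) := by
    rw [← Finset.sum_add_distrib]
    exact Finset.sum_le_sum fun x _ => negMulLog_add_le (hm x) (hr x)
  rw [massEntropy_pair]
  simp only [massEntropy, Pi.add_apply, Finset.sum_add_distrib]
  linarith

end MassEntropy

section CondEntropy

variable {X Y : Type*} [Fintype X] [Fintype Y]

/-- The conditional entropy `H(X|Y)`, in nats, of a nonnegative function on `X × Y`; it is
homogeneous of degree one in `P`. -/
def condEntropy (P : X × Y → ℝ) : ℝ :=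
  ∑ y, massEntropy fun x => P (x, y)

lemma shannonEntropy_mul_log_two {S : Type*} [Fintype S] (P : S → ℝ) :
    shannonEntropy P * Real.log 2 = ∑ s, Real.negMulLog (P s) := by
  have hlog : Real.log 2 ≠ 0 := (Real.log_pos one_lt_two).ne'
  rw [shannonEntropy, Finset.sum_mul]
  refine Finset.sum_congr rfl fun s _ => ?_
  rw [neg_mul, mul_assoc, Real.logb, div_mul_cancel₀ _ hlog, Real.negMulLog, neg_mul]

lemma condEntropy_eq_shannonEntropy_sub_mul_log_two (P : X × Y → ℝ) :
    condEntropy P =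
      (shannonEntropy P - shannonEntropy fun y => ∑ x, P (x, y)) * Real.log 2 := by
  simp only [condEntropy, massEntropy, sub_mul, shannonEntropy_mul_log_two,
    Fintype.sum_prod_type_right, Finset.sum_sub_distrib]

lemma condEntropy_nonneg {P : X × Y → ℝ} (hP : 0 ≤ P) : 0 ≤ condEntropy P :=
  Finset.sum_nonneg fun _ _ => massEntropy_nonneg fun _ => hP _

lemma condEntropy_le_sum_mul_log_card {P : X × Y → ℝ} (hP : 0 ≤ P) :
    condEntropy P ≤ (∑ z, P z) * Real.log (Fintype.card X) := by
  rw [Fintype.sum_prod_type_right, Finset.sum_mul]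
  exact Finset.sum_le_sum fun _ _ => massEntropy_le_sum_mul_log_card fun _ => hP _

lemma condEntropy_le_condEntropy_add {m r : X × Y → ℝ} (hm : 0 ≤ m) (hr : 0 ≤ r) :
    condEntropy m ≤ condEntropy (m + r) :=
  Finset.sum_le_sum fun _ _ => massEntropy_le_massEntropy_add (fun _ => hm _) fun _ => hr _

lemma condEntropy_add_le {m r : X × Y → ℝ} (hm : 0 ≤ m) (hr : 0 ≤ r) :
    condEntropy (m + r) ≤ condEntropy m + condEntropy r + massEntropy ![∑ z, m z, ∑ z, r z] := by
  let mass (y : Y) : Fin 2 → ℝ := ![∑ x, m (x, y), ∑ x, r (x, y)]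
  have mass_nonneg : 0 ≤ mass := fun _ => Fin.forall_fin_two.2
    ⟨Finset.sum_nonneg fun _ _ => hm _, Finset.sum_nonneg fun _ _ => hr _⟩
  have sum_mass : ∑ y, mass y = ![∑ z, m z, ∑ z, r z] := by
    ext i
    fin_cases i <;> simp [mass, Fintype.sum_prod_type_right]
  calc condEntropy (m + r)
      ≤ ∑ y, (massEntropy (fun x => m (x, y)) + massEntropy (fun x => r (x, y)) +
          massEntropy (mass y)) :=
        Finset.sum_le_sum fun _ _ => massEntropy_add_le (fun _ => hm _) fun _ => hr _
    _ = condEntropy m + condEntropy r + ∑ y, massEntropy (mass y) := by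
        simp only [condEntropy, Finset.sum_add_distrib]
    _ ≤ condEntropy m + condEntropy r + massEntropy ![∑ z, m z, ∑ z, r z] := by
        rw [← sum_mass]
        gcongr
        exact sum_massEntropy_le mass_nonneg

lemma condEntropy_sub_le_add_binEntropy {P Q : X × Y → ℝ} (hP : 0 ≤ P) (hQ : 0 ≤ Q)
    (hP1 : ∑ z, P z = 1) :
    condEntropy P - condEntropy Q ≤
      (∑ z, (P z - Q z)⁺) * Real.log (Fintype.card X) + Real.binEntropy (∑ z, (P z - Q z)⁺) := by
  have inf_add_excess (R S : X × Y → ℝ) : R ⊓ S + (R - S)⁺ = R := by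
    rw [inf_eq_sub_posPart_sub, sub_add_cancel]
  have hm : 0 ≤ P ⊓ Q := le_inf hP hQ
  have hr : 0 ≤ (P - Q)⁺ := posPart_nonneg _
  have mass_inf : ∑ z, (P ⊓ Q) z = 1 - ∑ z, (P - Q)⁺ z := by
    rw [eq_sub_iff_add_eq, ← hP1, ← Finset.sum_add_distrib]
    exact Finset.sum_congr rfl fun z _ => congrFun (inf_add_excess P Q) z
  have inf_le_Q : condEntropy (P ⊓ Q) ≤ condEntropy Q := by
    have := condEntropy_le_condEntropy_add (le_inf hQ hP) (posPart_nonneg (Q - P))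
    rwa [inf_add_excess, inf_comm] at this
  have P_le := condEntropy_add_le hm hr
  rw [inf_add_excess, mass_inf, massEntropy_pair_one_sub] at P_le
  have excess_le := condEntropy_le_sum_mul_log_card hr
  simp only [Pi.posPart_apply, Pi.sub_apply] at P_le excess_le
  linarith

end CondEntropy

lemma one_fourth_le_exp_neg_one : (1 / 4 : ℝ) ≤ Real.exp (-1) := by
  rw [Real.exp_neg, ← one_div]
  exact one_div_le_one_div_of_le (Real.exp_pos 1) (by linarith [Real.exp_one_lt_d9])

lemma monotoneOn_negMulLog : MonotoneOn Real.negMulLog (Set.Icc 0 (Real.exp (-1))) := by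
  refine monotoneOn_of_deriv_nonneg (convex_Icc _ _) Real.continuous_negMulLog.continuousOn ?_ ?_
  all_goals rw [interior_Icc]
  · exact fun x hx => (Real.differentiableAt_negMulLog_iff.2 hx.1.ne').differentiableWithinAt
  · intro x hx
    rw [Real.deriv_negMulLog hx.1.ne', sub_nonneg, le_neg, Real.log_le_iff_le_exp hx.1]
    exact hx.2.le

lemma eta_mul_log_two (t : ℝ) : eta t * Real.log 2 = Real.negMulLog (min t (1 / 4)) := by
  have hlog : Real.log 2 ≠ 0 := (Real.log_pos one_lt_two).ne'
  unfold eta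
  split_ifs with ht
  · rw [min_eq_left ht, neg_mul, mul_assoc, Real.logb, div_mul_cancel₀ _ hlog, Real.negMulLog,
      neg_mul]
  · have log_fourth : Real.log (1 / 4) = -(2 * Real.log 2) := by
      rw [one_div, Real.log_inv, show (4 : ℝ) = 2 ^ 2 by norm_num, Real.log_pow, Nat.cast_ofNat]
    rw [min_eq_right (not_le.1 ht).le, Real.negMulLog, log_fourth]
    ring

lemma monotoneOn_eta : MonotoneOn eta (Set.Ici 0) := by
  intro s hs t ht hst
  have min_mem {u : ℝ} (hu : 0 ≤ u) : min u (1 / 4) ∈ Set.Icc 0 (Real.exp (-1)) :=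
    ⟨le_min hu (by norm_num), (min_le_right _ _).trans one_fourth_le_exp_neg_one⟩
  rw [← mul_le_mul_iff_left₀ (Real.log_pos one_lt_two), eta_mul_log_two, eta_mul_log_two]
  exact monotoneOn_negMulLog (min_mem hs) (min_mem ht) (min_le_min_right _ hst)

lemma eta_nonneg_s19 {t : ℝ} (ht : 0 ≤ t) : 0 ≤ eta t := by
  simpa [eta] using monotoneOn_eta Set.self_mem_Ici ht ht

lemma binEntropy_le_eta_add {p : ℝ} (hp : 0 ≤ p) :
    Real.binEntropy p ≤ eta p * Real.log 2 + 2 * p * Real.log 2 := by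
  rcases le_or_gt p (1 / 4) with hp4 | hp4
  · have := Real.negMulLog_le_one_sub_self (x := 1 - p) (by linarith)
    have : p * 1 ≤ p * (2 * Real.log 2) :=
      mul_le_mul_of_nonneg_left (by linarith [Real.log_two_gt_d9]) hp
    rw [eta_mul_log_two, min_eq_left hp4, Real.binEntropy_eq_negMulLog_add_negMulLog_one_sub]
    linarith
  · calc Real.binEntropy p ≤ Real.log 2 := Real.binEntropy_le_log_two
      _ = 1 / 2 * Real.log 2 + 2 * (1 / 4) * Real.log 2 := by ring
      _ ≤ eta p * Real.log 2 + 2 * p * Real.log 2 := by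
        rw [eta, if_neg hp4.not_ge]
        gcongr

lemma condEntropy_sub_le_eta_add {X Y : Type*} [Fintype X] [Fintype Y] {P Q : X × Y → ℝ}
    (hP : 0 ≤ P) (hQ : 0 ≤ Q) (hP1 : ∑ z, P z = 1) :
    condEntropy P - condEntropy Q ≤ eta (∑ z, (P z - Q z)⁺) * Real.log 2 +
      3 * (∑ z, (P z - Q z)⁺) * Real.log (Fintype.card X) := by
  set δ := ∑ z, (P z - Q z)⁺
  have hδ : 0 ≤ δ := Finset.sum_nonneg fun _ _ => posPart_nonneg _
  have hlog : 0 ≤ Real.log 2 := Real.log_nonneg one_le_two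
  rcases le_or_gt (Fintype.card X) 1 with hX | hX
  · have log_card : Real.log (Fintype.card X) = 0 := by
      interval_cases Fintype.card X <;> simp
    have hP0 := condEntropy_le_sum_mul_log_card hP
    rw [log_card, mul_zero] at hP0 ⊢
    linarith [condEntropy_nonneg hQ, mul_nonneg (eta_nonneg_s19 hδ) hlog]
  · have log_two_le : Real.log 2 ≤ Real.log (Fintype.card X) :=
      Real.log_le_log two_pos (by exact_mod_cast hX)
    calc condEntropy P - condEntropy Q
        ≤ δ * Real.log (Fintype.card X) + Real.binEntropy δ :=
          condEntropy_sub_le_add_binEntropy hP hQ hP1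
      _ ≤ δ * Real.log (Fintype.card X) +
            (eta δ * Real.log 2 + 2 * δ * Real.log (Fintype.card X)) := by
          gcongr
          exact (binEntropy_le_eta_add hδ).trans (by gcongr)
      _ = eta δ * Real.log 2 + 3 * δ * Real.log (Fintype.card X) := by ring

lemma two_mul_sum_posPart_sub {ι : Type*} [Fintype ι] {P Q : ι → ℝ}
    (h : ∑ i, P i = ∑ i, Q i) : 2 * ∑ i, (P i - Q i)⁺ = ∑ i, |P i - Q i| := by
  simp only [Finset.mul_sum, ← nsmul_eq_mul, ← Nat.cast_ofNat (R := ℝ) (n := 2),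
    ← add_abs_eq_two_nsmul_posPart, Finset.sum_add_distrib, Finset.sum_sub_distrib, h, sub_self,
    zero_add]

lemma shannonEntropy_sub_marginal_sub_le {X Y : Type*} [Fintype X] [Fintype Y]
    {P Q : X × Y → ℝ} (hP : 0 ≤ P) (hQ : 0 ≤ Q) (hP1 : ∑ z, P z = 1) (hQ1 : ∑ z, Q z = 1)
    {ε : ℝ} (hPQ : ∑ z, |P z - Q z| ≤ ε) :
    (shannonEntropy P - shannonEntropy fun y => ∑ x, P (x, y)) -
        (shannonEntropy Q - shannonEntropy fun y => ∑ x, Q (x, y)) ≤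
      eta (2 * ε) + 3 * ε * Real.logb 2 (Fintype.card X) := by
  have hlog : 0 < Real.log 2 := Real.log_pos one_lt_two
  set δ := ∑ z, (P z - Q z)⁺
  have hδ : 0 ≤ δ := Finset.sum_nonneg fun _ _ => posPart_nonneg _
  have hδε : 2 * δ ≤ ε := (two_mul_sum_posPart_sub (hP1.trans hQ1.symm)).trans_le hPQ
  have eta_le : eta δ ≤ eta (2 * ε) :=
    monotoneOn_eta hδ (Set.mem_Ici.2 (by linarith)) (by linarith)
  refine le_of_mul_le_mul_right ?_ hlog
  calc _ = condEntropy P - condEntropy Q := by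
        simp only [condEntropy_eq_shannonEntropy_sub_mul_log_two, sub_mul]
    _ ≤ eta δ * Real.log 2 + 3 * δ * Real.log (Fintype.card X) :=
        condEntropy_sub_le_eta_add hP hQ hP1
    _ ≤ eta (2 * ε) * Real.log 2 + 3 * ε * Real.log (Fintype.card X) := by
        have := Real.log_natCast_nonneg (Fintype.card X)
        gcongr
        linarith
    _ = (eta (2 * ε) + 3 * ε * Real.logb 2 (Fintype.card X)) * Real.log 2 := by
        rw [add_mul, mul_assoc _ (Real.logb _ _), Real.logb, div_mul_cancel₀ _ hlog.ne']

/-- Fannes-type inequality for classical conditional entropy: if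
`∑_{x,y} |P(x,y) - Q(x,y)| ≤ ε` then
`|H(X|Y)_P - H(X|Y)_Q| ≤ η(2ε) + 3ε log₂ |X|`. -/
theorem classical_condEntropy_fannes
    {X Y : Type*} [Fintype X] [Fintype Y]
    (P Q : X × Y → ℝ)
    (hP : ∀ z, 0 ≤ P z) (hP1 : (∑ z, P z) = 1)
    (hQ : ∀ z, 0 ≤ Q z) (hQ1 : (∑ z, Q z) = 1)
    (ε : ℝ) (hPQ : ∑ z, |P z - Q z| ≤ ε) :
    |(shannonEntropy P - shannonEntropy (fun y => ∑ x, P (x, y)))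
        - (shannonEntropy Q - shannonEntropy (fun y => ∑ x, Q (x, y)))|
      ≤ eta (2 * ε) + 3 * ε * Real.logb 2 (Fintype.card X) := by
  have hQP : ∑ z, |Q z - P z| ≤ ε := by simpa only [abs_sub_comm] using hPQ
  rw [abs_sub_le_iff]
  exact ⟨shannonEntropy_sub_marginal_sub_le hP hQ hP1 hQ1 hPQ,
    shannonEntropy_sub_marginal_sub_le hQ hP hQ1 hP1 hQP⟩

end
end
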